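/- arXiv:2105.11027 — 3 statements merged into one kernel-verified Lean document; each statement's English description precedes it below -/
import Mathlib

section
/- Let π be a finite-dimensional complex representation of GL_n(F_q). Suppose a+b ≤ n and c+d ≤ n, and that π has low rank for both U_{a,b} and U_{c,d}, i.e. rank_{a,b}(π) < min(a,b) and rank_{c,d}(π) < min(c,d). Then rank_{a,b}(π) = rank_{c,d}(π). -/
/-!
STATEMENT 0: If a finite-dimensional complex representation π of GL_n(F_q) has
low rank with respect to two standard matrix subgroups U_{a,b} and U_{c,d}
(i.e. rank < min a b, resp. rank < min c d), then the two ranks agree.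
-/

open Matrix
open scoped MatrixGroups

set_option linter.unusedSectionVars false

namespace Stmt0

variable {F : Type} [Field F] [Fintype F] [DecidableEq F]

/-- The `n × n` matrix with the `a × b` matrix `X` placed in the block occupying
rows `0,…,a-1` and columns `n-b,…,n-1`, and `0` elsewhere. -/
def blockEmbed (n a b : ℕ) (X : Matrix (Fin a) (Fin b) F) : Matrix (Fin n) (Fin n) F :=
  Matrix.of fun i j =>
    if hi : (i : ℕ) < a then
      if hj : n - b ≤ (j : ℕ) ∧ (j : ℕ) - (n - b) < b then
        X ⟨i, hi⟩ ⟨(j : ℕ) - (n - b), hj.2⟩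
      else 0
    else 0

lemma blockEmbed_mul_blockEmbed {n a b : ℕ} (hab : a + b ≤ n)
    (X Y : Matrix (Fin a) (Fin b) F) :
    blockEmbed n a b X * blockEmbed n a b Y = 0 := by
  ext i j
  rw [Matrix.mul_apply, Matrix.zero_apply]
  apply Finset.sum_eq_zero
  intro k _
  rcases Nat.lt_or_ge (k : ℕ) a with hk | hk
  · have h2 : ¬ (n - b ≤ (k : ℕ) ∧ (k : ℕ) - (n - b) < b) := by
      rintro ⟨h, -⟩; omega
    have hz : blockEmbed n a b X i k = 0 := by
      unfold blockEmbed
      by_cases hi : (i : ℕ) < a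
      · rw [Matrix.of_apply, dif_pos hi, dif_neg h2]
      · rw [Matrix.of_apply, dif_neg hi]
    rw [hz, zero_mul]
  · have hz : blockEmbed n a b Y k j = 0 := by
      unfold blockEmbed
      rw [Matrix.of_apply, dif_neg (Nat.not_lt.2 hk)]
    rw [hz, mul_zero]

/-- The element `I_n + blockEmbed X` of `GL_n(F)`; for `a + b ≤ n` these elements
form the abelian subgroup `U_{a,b}` (identified with `(M_{a,b}(F), +)`). -/
def uU (n a b : ℕ) (hab : a + b ≤ n) (X : Matrix (Fin a) (Fin b) F) : GL (Fin n) F where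
  val := 1 + blockEmbed n a b X
  inv := 1 - blockEmbed n a b X
  val_inv := by
    have h := blockEmbed_mul_blockEmbed hab X X
    have e : (1 + blockEmbed n a b X) * (1 - blockEmbed n a b X)
        = 1 - blockEmbed n a b X * blockEmbed n a b X := by noncomm_ring
    rw [e, h, sub_zero]
  inv_val := by
    have h := blockEmbed_mul_blockEmbed hab X X
    have e : (1 - blockEmbed n a b X) * (1 + blockEmbed n a b X)
        = 1 - blockEmbed n a b X * blockEmbed n a b X := by noncomm_ring
    rw [e, h, sub_zero]

variable {V : Type} [AddCommGroup V] [Module ℂ V]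

/-- The character `γ_T` of `U_{a,b} ≅ M_{a,b}(F_q)`, `γ_T(X) = χ₀(trace (T*X))`,
appears in (the restriction to `U_{a,b}` of) the representation `π`, i.e. its
eigenspace is nonzero. -/
def CharAppears (χ₀ : AddChar F ℂ) {n : ℕ} (π : Representation ℂ (GL (Fin n) F) V)
    {a b : ℕ} (hab : a + b ≤ n) (T : Matrix (Fin b) (Fin a) F) : Prop :=
  ∃ v : V, v ≠ 0 ∧ ∀ X : Matrix (Fin a) (Fin b) F,
    π (uU n a b hab X) v = χ₀ ((T * X).trace) • v

/-- `rank_{a,b}(π) = k` : the maximal rank of a character of `U_{a,b}`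
appearing in `π|U_{a,b}` is `k`.  (The rank of `γ_T` is `rank T`.) -/
def HasRankAB (χ₀ : AddChar F ℂ) {n : ℕ} (π : Representation ℂ (GL (Fin n) F) V)
    {a b : ℕ} (hab : a + b ≤ n) (k : ℕ) : Prop :=
  (∃ T, CharAppears χ₀ π hab T ∧ T.rank = k) ∧
  (∀ T, CharAppears χ₀ π hab T → T.rank ≤ k)

/-! ### Selection matrices -/

lemma mul_sel {R p q s : Type*} [NonAssocSemiring R] [Fintype q] [DecidableEq q]
    (M : Matrix p q R) (e : s → q) :
    M * (1 : Matrix q q R).submatrix id e = M.submatrix id e := by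
  ext i j
  simp [Matrix.mul_apply, Matrix.one_apply]

lemma sel_mul {R p q s : Type*} [NonAssocSemiring R] [Fintype q] [DecidableEq q]
    (M : Matrix q p R) (e : s → q) :
    (1 : Matrix q q R).submatrix e id * M = M.submatrix e id := by
  ext i j
  simp [Matrix.mul_apply, Matrix.one_apply]

/-- row inclusion -/
def rowInc {n a b : ℕ} (hab : a + b ≤ n) (i : Fin a) : Fin n := ⟨i, by omega⟩

/-- column inclusion -/
def colInc {n a b : ℕ} (hab : a + b ≤ n) (j : Fin b) : Fin n := ⟨n - b + j, by omega⟩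

/-- put `X` in rows `e` and columns `f` -/
def place {p q s t : ℕ} (e : Fin s → Fin p) (f : Fin t → Fin q)
    (X : Matrix (Fin s) (Fin t) F) : Matrix (Fin p) (Fin q) F :=
  (1 : Matrix (Fin p) (Fin p) F).submatrix id e * X *
    (1 : Matrix (Fin q) (Fin q) F).submatrix f id

lemma blockEmbed_eq {n a b : ℕ} (hab : a + b ≤ n) (X : Matrix (Fin a) (Fin b) F) :
    blockEmbed n a b X = place (rowInc hab) (colInc hab) X := by
  ext i j
  simp only [blockEmbed, place, Matrix.of_apply, Matrix.mul_apply, Matrix.submatrix_apply,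
    Matrix.one_apply, id, ite_mul, one_mul, zero_mul, mul_ite, mul_one, mul_zero]
  split_ifs with hi hj
  · rw [Finset.sum_eq_single ⟨(j : ℕ) - (n - b), hj.2⟩, if_pos,
      Finset.sum_eq_single ⟨(i : ℕ), hi⟩, if_pos]
    · rfl
    · intro k _ hk
      rw [if_neg]
      rintro rfl
      exact hk rfl
    · simp
    · ext
      simp only [colInc]
      omega
    · intro k _ hk
      rw [if_neg]
      rintro rfl
      apply hk
      ext
      simp [colInc]
    · simp
  · symm
    apply Finset.sum_eq_zero
    intro k _
    rw [if_neg]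
    rintro rfl
    apply hj
    simp [colInc]
  · symm
    apply Finset.sum_eq_zero
    intro k _
    split_ifs
    · apply Finset.sum_eq_zero
      intro l _
      rw [if_neg]
      rintro rfl
      apply hi
      simp [rowInc]
    · rfl

/-- permutation matrix as an element of `GL` -/
def permGL {n : ℕ} (σ : Equiv.Perm (Fin n)) : GL (Fin n) F where
  val := (1 : Matrix (Fin n) (Fin n) F).submatrix id σ
  inv := (1 : Matrix (Fin n) (Fin n) F).submatrix σ id
  val_inv := by
    rw [Matrix.submatrix_mul_equiv, one_mul, Matrix.submatrix_id_id]
  inv_val := by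
    rw [sel_mul]
    ext i j
    simp [Matrix.one_apply]

lemma place_comp {n p q s t : ℕ} (r : Fin p → Fin n) (k : Fin q → Fin n)
    (e : Fin s → Fin p) (f : Fin t → Fin q) (X : Matrix (Fin s) (Fin t) F) :
    place r k (place e f X) = place (r ∘ e) (k ∘ f) X := by
  have h1 : (1 : Matrix (Fin n) (Fin n) F).submatrix id (r ∘ e) =
      (1 : Matrix (Fin n) (Fin n) F).submatrix id r *
        (1 : Matrix (Fin p) (Fin p) F).submatrix id e := by
    rw [mul_sel]; rfl
  have h2 : (1 : Matrix (Fin n) (Fin n) F).submatrix (k ∘ f) id =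
      (1 : Matrix (Fin q) (Fin q) F).submatrix f id *
        (1 : Matrix (Fin n) (Fin n) F).submatrix k id := by
    rw [sel_mul]; rfl
  simp only [place, h1, h2, Matrix.mul_assoc]

lemma trace_place {p q s t : ℕ} (T : Matrix (Fin q) (Fin p) F)
    (e : Fin s → Fin p) (f : Fin t → Fin q) (X : Matrix (Fin s) (Fin t) F) :
    (T * place e f X).trace = (T.submatrix f e * X).trace := by
  have : T.submatrix f e = (1 : Matrix (Fin q) (Fin q) F).submatrix f id *
      (T * (1 : Matrix (Fin p) (Fin p) F).submatrix id e) := by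
    rw [mul_sel, sel_mul]; rfl
  rw [this, place, ← Matrix.mul_assoc, Matrix.trace_mul_comm]
  simp only [Matrix.mul_assoc]

lemma conj_uU {n a b s t : ℕ} (hab : a + b ≤ n) (hst : s + t ≤ n)
    (e : Fin s → Fin a) (f : Fin t → Fin b) (σ : Equiv.Perm (Fin n))
    (he : ∀ i, σ (rowInc hst i) = rowInc hab (e i))
    (hf : ∀ i, σ (colInc hst i) = colInc hab (f i))
    (X : Matrix (Fin s) (Fin t) F) :
    permGL σ * uU n s t hst X = uU n a b hab (place e f X) * permGL σ := by
  have h1 : rowInc hab ∘ e = σ ∘ rowInc hst := by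
    funext i; simp [he]
  have h2 : colInc hab ∘ f = σ ∘ colInc hst := by
    funext i; simp [hf]
  have key : blockEmbed n a b (place e f X) =
      (permGL σ : GL (Fin n) F).val * blockEmbed n s t X * (permGL σ : GL (Fin n) F).inv := by
    rw [blockEmbed_eq hab, place_comp, h1, h2, ← place_comp, ← blockEmbed_eq hst]
    rfl
  apply Units.ext
  change (permGL σ : GL (Fin n) F).val * (1 + blockEmbed n s t X) =
    (1 + blockEmbed n a b (place e f X)) * (permGL σ : GL (Fin n) F).val
  rw [key, mul_add, add_mul, mul_one, one_mul, Matrix.mul_assoc (_ * _), Units.inv_eq_val_inv,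
    Units.inv_mul, mul_one]

lemma charAppears_submatrix {χ₀ : AddChar F ℂ} {n : ℕ} {π : Representation ℂ (GL (Fin n) F) V}
    {a b s t : ℕ} {hab : a + b ≤ n} (hst : s + t ≤ n)
    (e : Fin s → Fin a) (f : Fin t → Fin b)
    (he : Function.Injective e) (hf : Function.Injective f)
    {T : Matrix (Fin b) (Fin a) F} (hT : CharAppears χ₀ π hab T) :
    CharAppears χ₀ π hst (T.submatrix f e) := by
  obtain ⟨v, hv, h⟩ := hT
  have hinj : ∀ {a b : ℕ} (hab : a + b ≤ n),
      Function.Injective (Sum.elim (rowInc hab) (colInc hab)) := by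
    intro a b hab
    rintro (i | i) (j | j) hij <;> simp [rowInc, colInc, Fin.ext_iff] at hij ⊢ <;> omega
  obtain ⟨σ, hσ⟩ := Equiv.Perm.exists_extending_pair
    (Sum.elim (rowInc hst) (colInc hst)) (Sum.elim (rowInc hab) (colInc hab) ∘ Sum.map e f)
    (hinj hst) ((hinj hab).comp (he.sumMap hf))
  have h1 : ∀ i, σ (rowInc hst i) = rowInc hab (e i) := fun i => by
    simpa using hσ (Sum.inl i)
  have h2 : ∀ i, σ (colInc hst i) = colInc hab (f i) := fun i => by
    simpa using hσ (Sum.inr i)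
  refine ⟨π (permGL σ)⁻¹ v, ?_, fun X => ?_⟩
  · intro h0
    apply hv
    have := congrArg (π (permGL σ)) h0
    rwa [← Module.End.mul_apply, ← map_mul, mul_inv_cancel, map_one, map_zero] at this
  · have := conj_uU hab hst e f σ h1 h2 X
    have h3 : uU n s t hst X * (permGL σ)⁻¹ = (permGL σ)⁻¹ * uU n a b hab (place e f X) := by
      rw [mul_inv_eq_iff_eq_mul, mul_assoc, ← this, inv_mul_cancel_left]
    rw [← Module.End.mul_apply, ← map_mul, h3, map_mul, Module.End.mul_apply, h, map_smul,
      trace_place]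

/-! ### Minors -/

lemma exists_rows {p q m : ℕ} (T : Matrix (Fin p) (Fin q) F) (hm : m ≤ T.rank) :
    ∃ f : Fin m → Fin p, Function.Injective f ∧ (T.submatrix f id).rank = m := by
  obtain ⟨κ, g, hg, hsp, hli⟩ := exists_linearIndependent' F T.row
  have : Finite κ := Finite.of_injective g hg
  have := Fintype.ofFinite κ
  have hc : T.rank = Fintype.card κ := by
    rw [Matrix.rank_eq_finrank_span_row, ← hsp, finrank_span_eq_card hli]
  let i : Fin m → κ := fun k => (Fintype.equivFin κ).symm (Fin.castLE (hc ▸ hm) k)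
  have hi : Function.Injective i :=
    (Fintype.equivFin κ).symm.injective.comp (Fin.castLE_injective _)
  refine ⟨g ∘ i, hg.comp hi, ?_⟩
  have : LinearIndependent F (T.submatrix (g ∘ i) id).row := hli.comp i hi
  simpa using this.rank_matrix

lemma exists_minor {p q m : ℕ} (T : Matrix (Fin p) (Fin q) F) (hm : m ≤ T.rank) :
    ∃ (f : Fin m → Fin p) (e : Fin m → Fin q), Function.Injective f ∧ Function.Injective e ∧
      (T.submatrix f e).rank = m := by
  obtain ⟨f, hf, h⟩ := exists_rows T hm
  obtain ⟨e, he, hcol⟩ := exists_rows (T.submatrix f id)ᵀ (by rw [Matrix.rank_transpose, h])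
  refine ⟨f, e, hf, he, ?_⟩
  rw [← Matrix.rank_transpose]
  exact hcol

/-! ### Fourier analysis -/

lemma nondeg {χ₀ : AddChar F ℂ} (hχ₀ : χ₀ ≠ 1) {p q : ℕ} (D : Matrix (Fin q) (Fin p) F)
    (h : ∀ X : Matrix (Fin p) (Fin q) F, χ₀ ((D * X).trace) = 1) : D = 0 := by
  by_contra hD
  apply hχ₀
  have : ∃ i j, D i j ≠ 0 := by
    by_contra! hc
    exact hD (by ext i j; exact hc i j)
  obtain ⟨i, j, hij⟩ := this
  ext x
  have := h (Matrix.single j i (x / D i j))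
  rw [Matrix.trace_mul_single] at this
  have hx : D i j * (x / D i j) = x := by field_simp
  have h2 : MulOpposite.op (x / D i j) • D i j = x := hx
  rw [h2] at this
  simpa using this

/-- the character `T ↦ χ₀ (trace (T X))` -/
def trChar (χ₀ : AddChar F ℂ) {p q : ℕ} (X : Matrix (Fin p) (Fin q) F) :
    AddChar (Matrix (Fin q) (Fin p) F) ℂ where
  toFun T := χ₀ ((T * X).trace)
  map_zero_eq_one' := by simp
  map_add_eq_mul' A B := by simp [Matrix.add_mul, AddChar.map_add_eq_mul]

lemma sum_trChar {χ₀ : AddChar F ℂ} (hχ₀ : χ₀ ≠ 1) {p q : ℕ} (X : Matrix (Fin p) (Fin q) F)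
    (hX : X ≠ 0) : ∑ T : Matrix (Fin q) (Fin p) F, χ₀ ((T * X).trace) = 0 := by
  classical
  have h := AddChar.sum_eq_ite (trChar χ₀ X)
  rw [if_neg] at h
  · exact h
  · intro h0
    apply hX
    apply nondeg hχ₀
    intro T
    rw [Matrix.trace_mul_comm]
    exact DFunLike.congr_fun h0 T

lemma uU_add {n a b : ℕ} (hab : a + b ≤ n) (X Y : Matrix (Fin a) (Fin b) F) :
    uU n a b hab X * uU n a b hab Y = uU n a b hab (X + Y) := by
  apply Units.ext
  change (1 + blockEmbed n a b X) * (1 + blockEmbed n a b Y) = 1 + blockEmbed n a b (X + Y)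
  have h : blockEmbed n a b (X + Y) = blockEmbed n a b X + blockEmbed n a b Y := by
    simp only [blockEmbed_eq hab, place, Matrix.mul_add, Matrix.add_mul]
  rw [mul_add, add_mul, add_mul, blockEmbed_mul_blockEmbed hab, h]
  simp [add_assoc]

lemma uU_zero {n a b : ℕ} (hab : a + b ≤ n) :
    uU n a b hab (0 : Matrix (Fin a) (Fin b) F) = 1 := by
  have := uU_add hab (0 : Matrix (Fin a) (Fin b) F) 0
  simpa using this

/-- Every character appearing on `U_{s,t}` is the restriction of one appearing on `U_{a,b}`. -/
lemma exists_extension {χ₀ : AddChar F ℂ} (hχ₀ : χ₀ ≠ 1) {n : ℕ}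
    {π : Representation ℂ (GL (Fin n) F) V}
    {a b s t : ℕ} (hab : a + b ≤ n) {hst : s + t ≤ n} (hsa : s ≤ a) (htb : t ≤ b)
    {S : Matrix (Fin t) (Fin s) F} (hS : CharAppears χ₀ π hst S) :
    ∃ T, CharAppears χ₀ π hab T ∧ ∃ f e, T.submatrix f e = S := by
  obtain ⟨v, hv, h⟩ := hS
  let w : Matrix (Fin b) (Fin a) F → V := fun T =>
    ∑ X : Matrix (Fin a) (Fin b) F, χ₀ ((T * (-X)).trace) • π (uU n a b hab X) v
  have hsum : ∑ T, w T = (Fintype.card (Matrix (Fin b) (Fin a) F) : ℂ) • v := by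
    simp only [w]
    rw [Finset.sum_comm]
    simp only [← Finset.sum_smul]
    rw [Finset.sum_eq_single 0]
    · simp [uU_zero]
    · intro X _ hX
      rw [sum_trChar hχ₀ _ (neg_ne_zero.2 hX), zero_smul]
    · simp
  have hw : ∃ T, w T ≠ 0 := by
    by_contra! hc
    simp only [hc, Finset.sum_const_zero] at hsum
    rcases smul_eq_zero.1 hsum.symm with h0 | h0
    · exact Nat.cast_ne_zero.2 Fintype.card_ne_zero h0
    · exact hv h0
  obtain ⟨T, hT⟩ := hw
  have hTe : ∀ Y, π (uU n a b hab Y) (w T) = χ₀ ((T * Y).trace) • w T := by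
    intro Y
    simp only [w, map_sum, map_smul, Finset.smul_sum]
    rw [← Equiv.sum_comp (Equiv.addLeft Y) (fun X => χ₀ ((T * Y).trace) •
      χ₀ ((T * (-X)).trace) • π (uU n a b hab X) v)]
    apply Finset.sum_congr rfl
    intro X _
    rw [← Module.End.mul_apply, ← map_mul, uU_add, smul_smul, ← AddChar.map_add_eq_mul,
      ← Matrix.trace_add, ← Matrix.mul_add]
    simp
  let e : Fin s → Fin a := Fin.castLE hsa
  let f : Fin t → Fin b := fun j => ⟨b - t + j, by omega⟩
  have hpl : ∀ X : Matrix (Fin s) (Fin t) F, uU n s t hst X = uU n a b hab (place e f X) := by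
    intro X
    apply Units.ext
    change 1 + blockEmbed n s t X = 1 + blockEmbed n a b (place e f X)
    rw [blockEmbed_eq hab, place_comp, blockEmbed_eq hst]
    congr 2
    funext j
    ext
    simp only [colInc, f, Function.comp]
    omega
  have hSe : ∀ X, π (uU n s t hst X) (w T) = χ₀ ((S * X).trace) • w T := by
    intro X
    simp only [w, map_sum, map_smul, Finset.smul_sum]
    apply Finset.sum_congr rfl
    intro Y _
    rw [← Module.End.mul_apply, ← map_mul]
    have hcomm : uU n s t hst X * uU n a b hab Y = uU n a b hab Y * uU n s t hst X := by
      rw [hpl, uU_add, uU_add, add_comm]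
    rw [hcomm, map_mul, Module.End.mul_apply, h, map_smul, smul_comm]
  refine ⟨T, ⟨w T, hT, hTe⟩, f, e, ?_⟩
  rw [← sub_eq_zero]
  apply nondeg hχ₀
  intro X
  have h1 := hTe (place e f X)
  rw [← hpl, hSe, trace_place] at h1
  have h2 := smul_left_injective ℂ hT h1
  rw [Matrix.sub_mul, Matrix.trace_sub, AddChar.map_sub_eq_div, h2, div_self]
  exact (AddChar.val_isUnit χ₀ _).ne_zero

lemma rank_le_aux {χ₀ : AddChar F ℂ} (hχ₀ : χ₀ ≠ 1) {n : ℕ}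
    {π : Representation ℂ (GL (Fin n) F) V}
    {a b c d : ℕ} (hab : a + b ≤ n) (hcd : c + d ≤ n) {k₁ k₂ : ℕ}
    (h₁ : HasRankAB χ₀ π hab k₁) (h₂ : HasRankAB χ₀ π hcd k₂)
    (hlow₁ : k₁ < min a b) : k₂ ≤ k₁ := by
  by_contra! hlt
  obtain ⟨T, hT, hr⟩ := h₂.1
  obtain ⟨f, e, hf, he, hrk⟩ := exists_minor (m := k₁ + 1) T (by omega)
  have hmm : (k₁ + 1) + (k₁ + 1) ≤ n := by omega
  have hA := charAppears_submatrix hmm e f he hf hT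
  obtain ⟨T', hT', f', e', hs⟩ := exists_extension hχ₀ hab (by omega) (by omega) hA
  have h3 := h₁.2 T' hT'
  have h4 := Matrix.rank_submatrix_le T' f' e'
  rw [hs, hrk] at h4
  omega

/-- Proposition 4.2.2. If `π` has low rank for the standard
subgroups `U_{a,b}` and `U_{c,d}`, then `rank_{a,b}(π) = rank_{c,d}(π)`. -/
theorem rank_eq_of_lowRank
    (χ₀ : AddChar F ℂ) (hχ₀ : χ₀ ≠ 1)
    {n : ℕ} {V : Type} [AddCommGroup V] [Module ℂ V] [FiniteDimensional ℂ V]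
    (π : Representation ℂ (GL (Fin n) F) V)
    {a b c d : ℕ} (hab : a + b ≤ n) (hcd : c + d ≤ n)
    {k₁ k₂ : ℕ}
    (h₁ : HasRankAB χ₀ π hab k₁) (h₂ : HasRankAB χ₀ π hcd k₂)
    (hlow₁ : k₁ < min a b) (hlow₂ : k₂ < min c d) :
    k₁ = k₂ := by
  apply le_antisymm
  · exact rank_le_aux hχ₀ hcd hab h₂ h₁ hlow₂
  · exact rank_le_aux hχ₀ hab hcd h₁ h₂ hlow₁

end Stmt0
end

section
/- Let k ≤ n/2 and let ω be the permutation representation of GL_n(F_q) × GL_k(F_q) on the complex-valued functions on M_{n,k}(F_q), given by ((g,h)·f)(T) = f(g^{-1}Th). Then: (1) the restriction of ω to GL_n(F_q) has U-rank k; (2) for each irreducible representation ν of GL_k(F_q), writing the ν-isotypic component of ω|_{GL_k} as Ξ_ν ⊗ ν with Ξ_ν a representation of GL_n(F_q), Ξ_ν contains a unique irreducible subrepresentation η(ν) of U-rank k, it occurs with multiplicity one, every other irreducible constituent of Ξ_ν has U-rank < k, and ν ↦ η(ν) is injective from the irreducible representations of GL_k(F_q) into the irreducible representations of GL_n(F_q)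 of U-rank k. -/
/-!
STATEMENT 7: The eta correspondence for the dual pair (GL_n, GL_k), k ≤ n/2:
the restriction to GL_n of the permutation representation ω on functions on
M_{n,k}(F_q) has U-rank k; for each irreducible ν of GL_k the GL_n-module
Ξ_ν = Hom_{GL_k}(ν, ω) contains a unique irreducible subrepresentation η(ν) of
U-rank k, with multiplicity one, all other constituents having lower U-rank,
and ν ↦ η(ν) is injective.
-/

open Matrix
open scoped MatrixGroups

set_option linter.unusedSectionVars false

namespace Stmt7

variable {F : Type} [Field F] [Fintype F] [DecidableEq F]

/-- The `n × n` matrix with the `a × b` matrix `X` placed in the block occupying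
rows `0,…,a-1` and columns `n-b,…,n-1`, and `0` elsewhere. -/
def blockEmbed (n a b : ℕ) (X : Matrix (Fin a) (Fin b) F) : Matrix (Fin n) (Fin n) F :=
  Matrix.of fun i j =>
    if hi : (i : ℕ) < a then
      if hj : n - b ≤ (j : ℕ) ∧ (j : ℕ) - (n - b) < b then
        X ⟨i, hi⟩ ⟨(j : ℕ) - (n - b), hj.2⟩
      else 0
    else 0

lemma blockEmbed_mul_blockEmbed {n a b : ℕ} (hab : a + b ≤ n)
    (X Y : Matrix (Fin a) (Fin b) F) :
    blockEmbed n a b X * blockEmbed n a b Y = 0 := by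
  ext i j
  rw [Matrix.mul_apply, Matrix.zero_apply]
  apply Finset.sum_eq_zero
  intro k _
  rcases Nat.lt_or_ge (k : ℕ) a with hk | hk
  · have h2 : ¬ (n - b ≤ (k : ℕ) ∧ (k : ℕ) - (n - b) < b) := by
      rintro ⟨h, -⟩; omega
    have hz : blockEmbed n a b X i k = 0 := by
      unfold blockEmbed
      by_cases hi : (i : ℕ) < a
      · rw [Matrix.of_apply, dif_pos hi, dif_neg h2]
      · rw [Matrix.of_apply, dif_neg hi]
    rw [hz, zero_mul]
  · have hz : blockEmbed n a b Y k j = 0 := by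
      unfold blockEmbed
      rw [Matrix.of_apply, dif_neg (Nat.not_lt.2 hk)]
    rw [hz, mul_zero]

/-- The element `I_n + blockEmbed X` of `GL_n(F)`; for `a + b ≤ n` these elements
form the abelian subgroup `U_{a,b}` (identified with `(M_{a,b}(F), +)`). -/
def uU (n a b : ℕ) (hab : a + b ≤ n) (X : Matrix (Fin a) (Fin b) F) : GL (Fin n) F where
  val := 1 + blockEmbed n a b X
  inv := 1 - blockEmbed n a b X
  val_inv := by
    have h := blockEmbed_mul_blockEmbed hab X X
    have e : (1 + blockEmbed n a b X) * (1 - blockEmbed n a b X)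
        = 1 - blockEmbed n a b X * blockEmbed n a b X := by noncomm_ring
    rw [e, h, sub_zero]
  inv_val := by
    have h := blockEmbed_mul_blockEmbed hab X X
    have e : (1 - blockEmbed n a b X) * (1 + blockEmbed n a b X)
        = 1 - blockEmbed n a b X * blockEmbed n a b X := by noncomm_ring
    rw [e, h, sub_zero]

variable {V : Type} [AddCommGroup V] [Module ℂ V]

/-- The character `γ_T` of `U_{a,b} ≅ M_{a,b}(F_q)`, `γ_T(X) = χ₀(trace (T*X))`,
appears in (the restriction to `U_{a,b}` of) the representation `π`, i.e. its
eigenspace is nonzero. -/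
def CharAppears (χ₀ : AddChar F ℂ) {n : ℕ} (π : Representation ℂ (GL (Fin n) F) V)
    {a b : ℕ} (hab : a + b ≤ n) (T : Matrix (Fin b) (Fin a) F) : Prop :=
  ∃ v : V, v ≠ 0 ∧ ∀ X : Matrix (Fin a) (Fin b) F,
    π (uU n a b hab X) v = χ₀ ((T * X).trace) • v

/-- `rank_{a,b}(π) = k` : the maximal rank of a character of `U_{a,b}`
appearing in `π|U_{a,b}` is `k`.  (The rank of `γ_T` is `rank T`.) -/
def HasRankAB (χ₀ : AddChar F ℂ) {n : ℕ} (π : Representation ℂ (GL (Fin n) F) V)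
    {a b : ℕ} (hab : a + b ≤ n) (k : ℕ) : Prop :=
  (∃ T, CharAppears χ₀ π hab T ∧ T.rank = k) ∧
  (∀ T, CharAppears χ₀ π hab T → T.rank ≤ k)


/-- The `U`-rank of a representation `π` of `GL_n(F_q)` equals `k`:
this is `rank_{⌊n/2⌋,⌈n/2⌉}(π) = k`. -/
def HasURank (χ₀ : AddChar F ℂ) {n : ℕ} (π : Representation ℂ (GL (Fin n) F) V) (k : ℕ) : Prop :=
  HasRankAB χ₀ π (show n / 2 + (n - n / 2) ≤ n by omega) k

/-- The permutation representation `ω` of `GL_n(F) × GL_k(F)` on complex-valued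
functions on `M_{n,k}(F)` : `((g,h)·f)(T) = f (g⁻¹ * T * h)`. -/
noncomputable def omegaRep (n k : ℕ) :
    Representation ℂ (GL (Fin n) F × GL (Fin k) F) (Matrix (Fin n) (Fin k) F → ℂ) where
  toFun p :=
    { toFun := fun f T =>
        f ((↑p.1⁻¹ : Matrix (Fin n) (Fin n) F) * T * (↑p.2 : Matrix (Fin k) (Fin k) F))
      map_add' := fun _ _ => rfl
      map_smul' := fun _ _ => rfl }
  map_one' := by
    refine LinearMap.ext fun f => funext fun T => ?_
    show f _ = f T
    congr 1
    simp
  map_mul' := by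
    intro p q
    refine LinearMap.ext fun f => funext fun T => ?_
    show f _ = f _
    congr 1
    simp [Prod.fst_mul, Prod.snd_mul, _root_.mul_inv_rev, Units.val_mul, Matrix.mul_assoc]

/-- The restriction of `ω` to `GL_n(F)` (acting by `(g·f)(T) = f(g⁻¹ T)`). -/
noncomputable def lambdaRep (n k : ℕ) :
    Representation ℂ (GL (Fin n) F) (Matrix (Fin n) (Fin k) F → ℂ) :=
  (omegaRep n k).comp (MonoidHom.inl _ _)

/-- The restriction of `ω` to `GL_k(F)` (acting by `(h·f)(T) = f(T h)`). -/
noncomputable def rRep (n k : ℕ) :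
    Representation ℂ (GL (Fin k) F) (Matrix (Fin n) (Fin k) F → ℂ) :=
  (omegaRep n k).comp (MonoidHom.inr _ _)

lemma lambda_r_comm (n k : ℕ) (g : GL (Fin n) F) (h : GL (Fin k) F) :
    lambdaRep n k g * rRep n k h = rRep n k h * lambdaRep n k g := by
  unfold lambdaRep rRep
  simp only [MonoidHom.comp_apply, MonoidHom.inl_apply, MonoidHom.inr_apply]
  rw [← _root_.map_mul, ← _root_.map_mul]
  congr 1
  simp [Prod.ext_iff]

/-- The space `Hom_H(ν, σ)` of intertwining operators from `ν` to `σ`. -/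
def interSub {H : Type} [Group H] {Vν M : Type} [AddCommGroup Vν] [Module ℂ Vν]
    [AddCommGroup M] [Module ℂ M]
    (ν : Representation ℂ H Vν) (σ : Representation ℂ H M) :
    Submodule ℂ (Vν →ₗ[ℂ] M) where
  carrier := {φ | ∀ h v, φ (ν h v) = σ h (φ v)}
  add_mem' := by
    intro φ ψ hφ hψ h v
    simp [LinearMap.add_apply, hφ h v, hψ h v]
  zero_mem' := by intro h v; simp
  smul_mem' := by
    intro c φ hφ h v
    simp [LinearMap.smul_apply, hφ h v]

/-- The representation `Ξ_ν` of `GL_n(F)` on `Hom_{GL_k}(ν, ω)`, acting by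
post-composition; this realizes the `ν`-isotypic component `Ξ_ν ⊗ ν` of `ω`. -/
noncomputable def XiRep (n k : ℕ) {Vν : Type} [AddCommGroup Vν] [Module ℂ Vν]
    (ν : Representation ℂ (GL (Fin k) F) Vν) :
    Representation ℂ (GL (Fin n) F) ↥(interSub ν (rRep n k)) where
  toFun g :=
    { toFun := fun φ => ⟨(lambdaRep n k g).comp (φ : Vν →ₗ[ℂ] _), by
        intro h v
        simp only [LinearMap.comp_apply]
        rw [φ.2 h v]
        exact LinearMap.congr_fun (lambda_r_comm n k g h) ((φ : Vν →ₗ[ℂ] _) v)⟩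
      map_add' := by
        intro φ ψ
        refine Subtype.ext (LinearMap.ext fun v => ?_)
        simp
      map_smul' := by
        intro c φ
        refine Subtype.ext (LinearMap.ext fun v => ?_)
        simp }
  map_one' := by
    refine LinearMap.ext fun φ => Subtype.ext (LinearMap.ext fun v => ?_)
    simp [_root_.map_one]
  map_mul' := by
    intro g h
    refine LinearMap.ext fun φ => Subtype.ext (LinearMap.ext fun v => ?_)
    simp [_root_.map_mul]

/-- Restriction of a representation to an invariant submodule. -/
noncomputable def subRep {G V : Type} [Group G] [AddCommGroup V] [Module ℂ V]
    (ρ : Representation ℂ G V) (N : Submodule ℂ V)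
    (hN : ∀ g : G, ∀ v ∈ N, ρ g v ∈ N) : Representation ℂ G ↥N where
  toFun g := (ρ g).restrict (fun v hv => hN g v hv)
  map_one' := by
    refine LinearMap.ext fun v => Subtype.ext ?_
    simp [LinearMap.restrict_apply]
  map_mul' := by
    intro g h
    refine LinearMap.ext fun v => Subtype.ext ?_
    simp [LinearMap.restrict_apply, _root_.map_mul]

/-- Equivalence (isomorphism) of two representations of a group `G`. -/
def RepEquiv {G V₁ V₂ : Type} [Group G] [AddCommGroup V₁] [Module ℂ V₁]
    [AddCommGroup V₂] [Module ℂ V₂]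
    (ρ₁ : Representation ℂ G V₁) (ρ₂ : Representation ℂ G V₂) : Prop :=
  ∃ e : V₁ ≃ₗ[ℂ] V₂, ∀ g v, e (ρ₁ g v) = ρ₂ g (e v)

/-- Irreducibility of a representation: the space is nonzero, and the only
invariant subspaces are `⊥` and `⊤`. -/
def IsIrred {G : Type} [Group G] {V : Type} [AddCommGroup V] [Module ℂ V]
    (ρ : Representation ℂ G V) : Prop :=
  (∃ v : V, v ≠ 0) ∧
    ∀ p : Submodule ℂ V, (∀ g : G, ∀ v ∈ p, ρ g v ∈ p) → p = ⊥ ∨ p = ⊤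

/-! ### Matrix preliminaries -/

/-- Inclusion matrix. -/
def incM (F : Type) [Field F] (p q o : ℕ) : Matrix (Fin p) (Fin q) F :=
  Matrix.of fun i j => if (i : ℕ) = j + o then 1 else 0

lemma incM_tr_mul (p q o : ℕ) (h : q + o ≤ p) :
    (incM F p q o)ᵀ * incM F p q o = 1 := by
  ext i j
  rw [Matrix.mul_apply, Finset.sum_eq_single ⟨i + o, by omega⟩]
  · simp [incM, Matrix.one_apply, Fin.ext_iff]
  · intro b _ hb
    have : (b : ℕ) ≠ i + o := fun h => hb (Fin.ext h)
    simp [incM, this]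
  · simp

lemma incM_tr_mul_zero (n a b : ℕ) :
    (incM F n a 0)ᵀ * incM F n b a = 0 := by
  ext i j
  rw [Matrix.mul_apply]
  apply Finset.sum_eq_zero
  intro x _
  simp only [incM, Matrix.transpose_apply, Matrix.of_apply]
  have := i.2
  split_ifs <;> first | omega | simp

lemma incM_tr_mul_zero' (n a b : ℕ) :
    (incM F n b a)ᵀ * incM F n a 0 = 0 := by
  have := congrArg Matrix.transpose (incM_tr_mul_zero (F := F) n a b)
  simpa using this

lemma incM_add (n a b : ℕ) (h : a + b = n) :
    incM F n a 0 * (incM F n a 0)ᵀ + incM F n b a * (incM F n b a)ᵀ = 1 := by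
  ext i j
  rw [Matrix.add_apply, Matrix.mul_apply, Matrix.mul_apply]
  by_cases hi : (i : ℕ) < a
  · rw [Finset.sum_eq_single ⟨i, hi⟩, Finset.sum_eq_zero]
    · simp [incM, Matrix.one_apply, Fin.ext_iff, eq_comm]
    · intro x _
      have : ¬ (i : ℕ) = x + a := by omega
      simp [incM, this]
    · intro b _ hb
      have : ¬ (i : ℕ) = b := fun h => hb (Fin.ext h.symm)
      simp [incM, this]
    · simp
  · rw [Finset.sum_eq_zero, Finset.sum_eq_single ⟨i - a, by omega⟩]
    · have : ((i : ℕ) - a + a) = i := by omega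
      simp [incM, Matrix.one_apply, Fin.ext_iff, eq_comm, this]
    · intro b _ hb
      have : ¬ (i : ℕ) = b + a := fun h => hb (Fin.ext (by simp; omega))
      simp [incM, this]
    · simp
    · intro x _
      have : ¬ (i : ℕ) = x := by omega
      simp [incM, this]

lemma blockEmbed_eq (n a b : ℕ) (h : a + b = n) (X : Matrix (Fin a) (Fin b) F) :
    blockEmbed n a b X = incM F n a 0 * X * (incM F n b a)ᵀ := by
  have hnb : n - b = a := by omega
  ext i j
  rw [Matrix.mul_apply]
  have key : ∀ x, (incM F n a 0 * X) i x = if hi : (i : ℕ) < a then X ⟨i, hi⟩ x else 0 := by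
    intro x
    rw [Matrix.mul_apply]
    split_ifs with hi
    · rw [Finset.sum_eq_single ⟨i, hi⟩]
      · simp [incM]
      · intro b _ hb
        have : ¬ (i : ℕ) = b := fun h => hb (Fin.ext h.symm)
        simp [incM, this]
      · simp
    · apply Finset.sum_eq_zero
      intro y _
      have : ¬ (i : ℕ) = y := by omega
      simp [incM, this]
  simp only [key]
  unfold blockEmbed
  rw [Matrix.of_apply]
  split_ifs with hi hj
  · rw [Finset.sum_eq_single ⟨(j : ℕ) - (n - b), hj.2⟩]
    · have : (j : ℕ) = j - (n - b) + a := by omega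
      simp [incM, ← this]
    · intro y _ hy
      have : ¬ (j : ℕ) = y + a := fun h => hy (Fin.ext (by simp; omega))
      simp [incM, this]
    · simp
  · symm
    apply Finset.sum_eq_zero
    intro y _
    have : ¬ (j : ℕ) = y + a := by have := y.2; omega
    simp [incM, this]
  · simp

/-- Block diagonal element of `GL_n`. -/
def gLevi (n a b : ℕ) (h : a + b = n) (A : GL (Fin a) F) (D : GL (Fin b) F) :
    GL (Fin n) F where
  val := incM F n a 0 * A.1 * (incM F n a 0)ᵀ + incM F n b a * D.1 * (incM F n b a)ᵀ
  inv := incM F n a 0 * A⁻¹.1 * (incM F n a 0)ᵀ + incM F n b a * D⁻¹.1 * (incM F n b a)ᵀ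
  val_inv := by
    have h1 := incM_tr_mul (F := F) n a 0 (by omega)
    have h2 := incM_tr_mul (F := F) n b a (by omega)
    have h3 := incM_tr_mul_zero (F := F) n a b
    have h4 := incM_tr_mul_zero' (F := F) n a b
    have h5 := incM_add (F := F) n a b h
    generalize incM F n a 0 = I at *
    generalize incM F n b a = J at *
    have e1 : (I * A.1 * Iᵀ + J * D.1 * Jᵀ) * (I * A⁻¹.1 * Iᵀ + J * D⁻¹.1 * Jᵀ)
       = I * A.1 * (Iᵀ * I) * A⁻¹.1 * Iᵀ + I * A.1 * (Iᵀ * J) * D⁻¹.1 * Jᵀ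
       + J * D.1 * (Jᵀ * I) * A⁻¹.1 * Iᵀ + J * D.1 * (Jᵀ * J) * D⁻¹.1 * Jᵀ := by
      simp only [Matrix.mul_add, Matrix.add_mul, Matrix.mul_assoc]; abel
    rw [e1, h1, h2, h3, h4]
    simp only [Matrix.mul_one, Matrix.mul_zero, Matrix.zero_mul, add_zero]
    rw [Matrix.mul_assoc I, Matrix.mul_assoc J, Units.mul_inv, Units.mul_inv]
    simpa using h5
  inv_val := by
    have h1 := incM_tr_mul (F := F) n a 0 (by omega)
    have h2 := incM_tr_mul (F := F) n b a (by omega)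
    have h3 := incM_tr_mul_zero (F := F) n a b
    have h4 := incM_tr_mul_zero' (F := F) n a b
    have h5 := incM_add (F := F) n a b h
    generalize incM F n a 0 = I at *
    generalize incM F n b a = J at *
    have e1 : (I * A⁻¹.1 * Iᵀ + J * D⁻¹.1 * Jᵀ) * (I * A.1 * Iᵀ + J * D.1 * Jᵀ)
       = I * A⁻¹.1 * (Iᵀ * I) * A.1 * Iᵀ + I * A⁻¹.1 * (Iᵀ * J) * D.1 * Jᵀ
       + J * D⁻¹.1 * (Jᵀ * I) * A.1 * Iᵀ + J * D⁻¹.1 * (Jᵀ * J) * D.1 * Jᵀ := by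
      simp only [Matrix.mul_add, Matrix.add_mul, Matrix.mul_assoc]; abel
    rw [e1, h1, h2, h3, h4]
    simp only [Matrix.mul_one, Matrix.mul_zero, Matrix.zero_mul, add_zero]
    rw [Matrix.mul_assoc I, Matrix.mul_assoc J, Units.inv_mul, Units.inv_mul]
    simpa using h5

/-- Conjugation of `U` by the Levi. -/
lemma uU_mul_gLevi (n a b : ℕ) (h : a + b = n) (A : GL (Fin a) F) (D : GL (Fin b) F)
    (X : Matrix (Fin a) (Fin b) F) :
    uU n a b h.le X * gLevi n a b h A D
      = gLevi n a b h A D * uU n a b h.le (A⁻¹.1 * X * D.1) := by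
  have h1 := incM_tr_mul (F := F) n a 0 (by omega)
  have h2 := incM_tr_mul (F := F) n b a (by omega)
  have h3 := incM_tr_mul_zero (F := F) n a b
  have h4 := incM_tr_mul_zero' (F := F) n a b
  apply Units.ext
  simp only [Units.val_mul, uU, gLevi, blockEmbed_eq n a b h]
  generalize incM F n a 0 = I at *
  generalize incM F n b a = J at *
  have e1 : (1 + I * X * Jᵀ) * (I * A.1 * Iᵀ + J * D.1 * Jᵀ)
     = (I * A.1 * Iᵀ + J * D.1 * Jᵀ) + I * X * (Jᵀ * I) * A.1 * Iᵀ
        + I * X * (Jᵀ * J) * D.1 * Jᵀ := by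
    simp only [Matrix.mul_add, Matrix.add_mul, Matrix.mul_assoc, Matrix.one_mul]; abel
  have e2 : (I * A.1 * Iᵀ + J * D.1 * Jᵀ) * (1 + I * (A⁻¹.1 * X * D.1) * Jᵀ)
     = (I * A.1 * Iᵀ + J * D.1 * Jᵀ) + I * A.1 * (Iᵀ * I) * A⁻¹.1 * X * D.1 * Jᵀ
        + J * D.1 * (Jᵀ * I) * A⁻¹.1 * X * D.1 * Jᵀ := by
    simp only [Matrix.mul_add, Matrix.add_mul, Matrix.mul_assoc, Matrix.mul_one]; abel
  rw [e1, e2, h1, h2, h4]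
  simp only [Matrix.mul_one, Matrix.mul_zero, Matrix.zero_mul, add_zero]
  rw [Matrix.mul_assoc I A.1 A⁻¹.1, Units.mul_inv]
  simp [Matrix.mul_assoc]

lemma uU_mul_uU (n a b : ℕ) (h : a + b ≤ n) (X Y : Matrix (Fin a) (Fin b) F) :
    uU n a b h X * uU n a b h Y = uU n a b h (X + Y) := by
  apply Units.ext
  simp only [Units.val_mul, uU]
  have e : blockEmbed n a b (X + Y) = blockEmbed n a b X + blockEmbed n a b Y := by
    ext i j
    simp only [blockEmbed, Matrix.of_apply, Matrix.add_apply]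
    split_ifs <;> simp
  have := blockEmbed_mul_blockEmbed h X Y
  rw [e, Matrix.mul_add, Matrix.add_mul, Matrix.add_mul, this]
  simp [add_assoc]

lemma uU_zero (n a b : ℕ) (h : a + b ≤ n) :
    uU n a b h (0 : Matrix (Fin a) (Fin b) F) = 1 := by
  apply Units.ext
  simp only [uU, Units.val_one]
  have : blockEmbed n a b (0 : Matrix (Fin a) (Fin b) F) = 0 := by
    ext i j
    simp [blockEmbed]
  simp [this]

/-- Generalized inverse. -/
lemma exists_ginv {p q : ℕ} (T : Matrix (Fin p) (Fin q) F) :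
    ∃ G : Matrix (Fin q) (Fin p) F, T * G * T = T := by
  let f := Matrix.toLin' T
  obtain ⟨s, hs⟩ := f.rangeRestrict.exists_rightInverse_of_surjective f.range_rangeRestrict
  obtain ⟨g, hg⟩ := LinearMap.exists_extend s
  refine ⟨LinearMap.toMatrix' g, ?_⟩
  apply Matrix.toLin'.injective
  rw [Matrix.toLin'_mul, Matrix.toLin'_mul, Matrix.toLin'_toMatrix']
  refine LinearMap.ext fun v => ?_
  have h1 : g (f v) = s (f.rangeRestrict v) := by
    rw [← hg]; rfl
  have h2 : f.rangeRestrict (s (f.rangeRestrict v)) = f.rangeRestrict v :=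
    LinearMap.congr_fun hs _
  have h3 := congrArg Subtype.val h2
  show f (g (f v)) = f v
  rw [h1]
  exact h3

/-- Two matrices with left inverses differ by an element of `GL`. -/
lemma exists_GL_mul_eq {p q : ℕ} (B B' : Matrix (Fin p) (Fin q) F)
    (L L' : Matrix (Fin q) (Fin p) F) (h : L * B = 1) (h' : L' * B' = 1) :
    ∃ D : GL (Fin p) F, D.1 * B = B' := by
  let f := Matrix.toLin' B
  let f' := Matrix.toLin' B'
  have hf : Function.Injective f := by
    apply Function.LeftInverse.injective (g := Matrix.toLin' L)
    intro x
    show ((Matrix.toLin' L).comp (Matrix.toLin' B)) x = x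
    rw [← Matrix.toLin'_mul, h]; simp
  have hf' : Function.Injective f' := by
    apply Function.LeftInverse.injective (g := Matrix.toLin' L')
    intro x
    show ((Matrix.toLin' L').comp (Matrix.toLin' B')) x = x
    rw [← Matrix.toLin'_mul, h']; simp
  let e := LinearEquiv.ofInjective f hf
  let e' := LinearEquiv.ofInjective f' hf'
  obtain ⟨g, hg⟩ := Submodule.exists_linearEquiv_restrict_eq (e.symm.trans e')
  let D : GL (Fin p) F :=
    { val := LinearMap.toMatrix' g.toLinearMap
      inv := LinearMap.toMatrix' g.symm.toLinearMap
      val_inv := by rw [← LinearMap.toMatrix'_comp]; simp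
      inv_val := by rw [← LinearMap.toMatrix'_comp]; simp }
  refine ⟨D, ?_⟩
  apply Matrix.toLin'.injective
  rw [Matrix.toLin'_mul, Matrix.toLin'_toMatrix']
  refine LinearMap.ext fun v => ?_
  have := hg (e v)
  simp at this
  exact this.symm

/-- Full rank factorization. -/
lemma exists_factor {b a k : ℕ} (S : Matrix (Fin b) (Fin a) F) (hS : S.rank = k) :
    ∃ (B : Matrix (Fin b) (Fin k) F) (C : Matrix (Fin k) (Fin a) F)
      (B' : Matrix (Fin k) (Fin b) F) (C' : Matrix (Fin a) (Fin k) F),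
      S = B * C ∧ B' * B = 1 ∧ C * C' = 1 := by
  let f := Matrix.toLin' S
  have hr : Module.finrank F (LinearMap.range f) = k := hS
  let e : LinearMap.range f ≃ₗ[F] (Fin k → F) :=
    LinearEquiv.ofFinrankEq _ _ (by simp [hr])
  let c : (Fin a → F) →ₗ[F] (Fin k → F) := e.toLinearMap.comp f.rangeRestrict
  let d : (Fin k → F) →ₗ[F] (Fin b → F) := (LinearMap.range f).subtype.comp e.symm.toLinearMap
  obtain ⟨c', hc'⟩ := c.exists_rightInverse_of_surjective
    (LinearMap.range_eq_top.2 (e.surjective.comp f.surjective_rangeRestrict))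
  obtain ⟨d', hd'⟩ := d.exists_leftInverse_of_injective
    (LinearMap.ker_eq_bot.2 ((Submodule.subtype_injective _).comp e.symm.injective))
  refine ⟨LinearMap.toMatrix' d, LinearMap.toMatrix' c, LinearMap.toMatrix' d',
    LinearMap.toMatrix' c', ?_, ?_, ?_⟩
  · rw [← LinearMap.toMatrix'_comp]
    apply Matrix.toLin'.injective
    rw [Matrix.toLin'_toMatrix']
    refine LinearMap.ext fun v => ?_
    simp [c, d, f]
  · rw [← LinearMap.toMatrix'_comp, hd']; simp
  · rw [← LinearMap.toMatrix'_comp, hc']; simp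

/-- The standard rank `k` matrix. -/
def S0 (F : Type) [Field F] (a b k : ℕ) : Matrix (Fin b) (Fin a) F :=
  incM F b k 0 * (incM F a k 0)ᵀ

lemma S0_rank {a b k : ℕ} (ha : k ≤ a) (hb : k ≤ b) : (S0 F a b k).rank = k := by
  apply le_antisymm
  · exact (Matrix.rank_mul_le_left _ _).trans ((Matrix.rank_le_width _))
  · have e : (incM F b k 0)ᵀ * S0 F a b k * incM F a k 0 = 1 := by
      unfold S0
      rw [← Matrix.mul_assoc, incM_tr_mul b k 0 (by omega), Matrix.one_mul,
        incM_tr_mul a k 0 (by omega)]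
    have h1 : ((1 : Matrix (Fin k) (Fin k) F)).rank = k := by
      rw [Matrix.rank_one]; simp
    rw [← e] at h1
    calc k = _ := h1.symm
      _ ≤ _ := Matrix.rank_mul_le_left _ _
      _ ≤ _ := Matrix.rank_mul_le_right _ _

lemma exists_conj {a b k : ℕ} (ha : k ≤ a) (hb : k ≤ b) (S : Matrix (Fin b) (Fin a) F)
    (hS : S.rank = k) :
    ∃ (A : GL (Fin a) F) (D : GL (Fin b) F), D.1 * S * A⁻¹.1 = S0 F a b k := by
  obtain ⟨B, C, B', C', h1, h2, h3⟩ := exists_factor S hS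
  obtain ⟨D, hD⟩ := exists_GL_mul_eq B (incM F b k 0) B' (incM F b k 0)ᵀ h2
    (incM_tr_mul b k 0 (by omega))
  obtain ⟨A, hA⟩ := exists_GL_mul_eq Cᵀ (incM F a k 0) C'ᵀ (incM F a k 0)ᵀ
    (by rw [← Matrix.transpose_mul, h3, Matrix.transpose_one]) (incM_tr_mul a k 0 (by omega))
  have hA' := congrArg Matrix.transpose hA
  rw [Matrix.transpose_mul, Matrix.transpose_transpose] at hA'
  let A1 : GL (Fin a) F :=
    { val := A⁻¹.1ᵀ
      inv := A.1ᵀ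
      val_inv := by rw [← Matrix.transpose_mul, Units.mul_inv, Matrix.transpose_one]
      inv_val := by rw [← Matrix.transpose_mul, Units.inv_mul, Matrix.transpose_one] }
  refine ⟨A1, D, ?_⟩
  have : A1⁻¹.1 = A.1ᵀ := rfl
  rw [this, h1, S0, ← hD, ← hA']
  simp only [Matrix.mul_assoc]
  
/-- Extension of `m ∈ GL_k` to `GL_p`. -/
def extGL {p k : ℕ} (h : k ≤ p) (m : GL (Fin k) F) : GL (Fin p) F where
  val := incM F p k 0 * m.1 * (incM F p k 0)ᵀ + (1 - incM F p k 0 * (incM F p k 0)ᵀ)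
  inv := incM F p k 0 * m⁻¹.1 * (incM F p k 0)ᵀ + (1 - incM F p k 0 * (incM F p k 0)ᵀ)
  val_inv := by
    have h1 := incM_tr_mul (F := F) p k 0 (by omega)
    generalize incM F p k 0 = I at *
    have e : (I * m.1 * Iᵀ + (1 - I * Iᵀ)) * (I * m⁻¹.1 * Iᵀ + (1 - I * Iᵀ))
      = I * m.1 * (Iᵀ * I) * m⁻¹.1 * Iᵀ + I * m.1 * Iᵀ - I * m.1 * (Iᵀ * I) * Iᵀ
        + I * m⁻¹.1 * Iᵀ - I * (Iᵀ * I) * m⁻¹.1 * Iᵀ + 1 - I * Iᵀ - I * Iᵀ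
        + I * (Iᵀ * I) * Iᵀ := by
      simp only [Matrix.mul_add, Matrix.add_mul, Matrix.mul_sub, Matrix.sub_mul,
        Matrix.mul_assoc, Matrix.one_mul, Matrix.mul_one]; abel
    rw [e, h1]
    simp only [Matrix.mul_one]
    rw [Matrix.mul_assoc I m.1, Units.mul_inv, Matrix.mul_one]
    abel
  inv_val := by
    have h1 := incM_tr_mul (F := F) p k 0 (by omega)
    generalize incM F p k 0 = I at *
    have e : (I * m⁻¹.1 * Iᵀ + (1 - I * Iᵀ)) * (I * m.1 * Iᵀ + (1 - I * Iᵀ))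
      = I * m⁻¹.1 * (Iᵀ * I) * m.1 * Iᵀ + I * m⁻¹.1 * Iᵀ - I * m⁻¹.1 * (Iᵀ * I) * Iᵀ
        + I * m.1 * Iᵀ - I * (Iᵀ * I) * m.1 * Iᵀ + 1 - I * Iᵀ - I * Iᵀ
        + I * (Iᵀ * I) * Iᵀ := by
      simp only [Matrix.mul_add, Matrix.add_mul, Matrix.mul_sub, Matrix.sub_mul,
        Matrix.mul_assoc, Matrix.one_mul, Matrix.mul_one]; abel
    rw [e, h1]
    simp only [Matrix.mul_one]
    rw [Matrix.mul_assoc I m⁻¹.1, Units.inv_mul, Matrix.mul_one]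
    abel

lemma extGL_mul {p k : ℕ} (h : k ≤ p) (m : GL (Fin k) F) :
    (extGL h m).1 * incM F p k 0 = incM F p k 0 * m.1 := by
  have h1 := incM_tr_mul (F := F) p k 0 (by omega)
  simp only [extGL]
  rw [Matrix.add_mul, Matrix.sub_mul, Matrix.mul_assoc _ _ (incM F p k 0),
    Matrix.mul_assoc _ _ (incM F p k 0), h1]
  simp

lemma mul_extGL {p k : ℕ} (h : k ≤ p) (m : GL (Fin k) F) :
    (incM F p k 0)ᵀ * (extGL h m).1 = m.1 * (incM F p k 0)ᵀ := by
  have h1 := incM_tr_mul (F := F) p k 0 (by omega)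
  simp only [extGL]
  rw [Matrix.mul_add, Matrix.mul_sub, ← Matrix.mul_assoc, ← Matrix.mul_assoc, ← Matrix.mul_assoc,
    h1]
  simp

lemma extGL_S0 {a b k : ℕ} (ha : k ≤ a) (hb : k ≤ b) (m : GL (Fin k) F) :
    (extGL hb m).1 * S0 F a b k * (extGL ha m)⁻¹.1 = S0 F a b k := by
  rw [S0, ← Matrix.mul_assoc, extGL_mul, Matrix.mul_assoc _ m.1, ← mul_extGL ha]
  rw [Matrix.mul_assoc, Matrix.mul_assoc, Units.mul_inv, Matrix.mul_one]

/-! ### Eigenvectors -/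

/-- `v` is a `γ_S`-eigenvector. -/
def IsEig (χ₀ : AddChar F ℂ) {n : ℕ} (π : Representation ℂ (GL (Fin n) F) V)
    {a b : ℕ} (hab : a + b ≤ n) (S : Matrix (Fin b) (Fin a) F) (v : V) : Prop :=
  ∀ X : Matrix (Fin a) (Fin b) F, π (uU n a b hab X) v = χ₀ ((S * X).trace) • v

lemma IsEig.levi {χ₀ : AddChar F ℂ} {n : ℕ} {π : Representation ℂ (GL (Fin n) F) V}
    {a b : ℕ} (h : a + b = n) {S : Matrix (Fin b) (Fin a) F} {v : V}
    (hv : IsEig χ₀ π h.le S v) (A : GL (Fin a) F) (D : GL (Fin b) F) :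
    IsEig χ₀ π h.le (D.1 * S * A⁻¹.1) (π (gLevi n a b h A D) v) := by
  intro X
  rw [← Module.End.mul_apply, ← map_mul, uU_mul_gLevi, map_mul, Module.End.mul_apply, hv, map_smul]
  congr 2
  rw [← Matrix.mul_assoc, ← Matrix.mul_assoc, Matrix.trace_mul_comm]
  simp only [Matrix.mul_assoc]

lemma rep_ne_zero {G W : Type} [Group G] [AddCommGroup W] [Module ℂ W]
    (π : Representation ℂ G W) (g : G) {v : W} (hv : v ≠ 0) : π g v ≠ 0 := by
  intro h
  apply hv
  have : π g⁻¹ (π g v) = v := by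
    rw [← Module.End.mul_apply, ← map_mul]; simp
  rw [← this, h, map_zero]

lemma CharAppears.to_S0 {χ₀ : AddChar F ℂ} {n : ℕ} {π : Representation ℂ (GL (Fin n) F) V}
    {a b k : ℕ} (h : a + b = n) (ha : k ≤ a) (hb : k ≤ b) {S : Matrix (Fin b) (Fin a) F}
    (hv : CharAppears χ₀ π h.le S) (hS : S.rank = k) :
    CharAppears χ₀ π h.le (S0 F a b k) := by
  obtain ⟨v, hv0, hv⟩ := hv
  obtain ⟨A, D, hAD⟩ := exists_conj ha hb S hS
  refine ⟨π (gLevi n a b h A D) v, rep_ne_zero π _ hv0, ?_⟩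
  rw [← hAD]
  exact IsEig.levi h hv A D

lemma char_nondeg (χ₀ : AddChar F ℂ) (hχ₀ : χ₀ ≠ 1) (t : F) (ht : ∀ c : F, χ₀ (c * t) = 1) :
    t = 0 := by
  by_contra h0
  obtain ⟨c, hc⟩ := AddChar.ne_one_iff.1 hχ₀
  apply hc
  have := ht (c / t)
  rwa [div_mul_cancel₀ _ h0] at this

/-- Some character appears in any nonzero representation. -/
lemma exists_charAppears (χ₀ : AddChar F ℂ) (hχ₀ : χ₀ ≠ 1) {n : ℕ}
    (π : Representation ℂ (GL (Fin n) F) V)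
    {a b : ℕ} (hab : a + b ≤ n) (v : V) (hv : v ≠ 0) :
    ∃ S, CharAppears χ₀ π hab S := by
  classical
  let w : Matrix (Fin b) (Fin a) F → V := fun S =>
    ∑ X : Matrix (Fin a) (Fin b) F, χ₀ (-(S * X).trace) • π (uU n a b hab X) v
  have hw : ∀ S, IsEig χ₀ π hab S (w S) := by
    intro S Y
    simp only [w]
    rw [map_sum, Finset.smul_sum]
    refine Fintype.sum_equiv (Equiv.addLeft Y) _ _ fun X => ?_
    rw [map_smul, ← Module.End.mul_apply, ← map_mul, uU_mul_uU, smul_smul, ← AddChar.map_add_eq_mul]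
    simp only [Equiv.coe_addLeft]
    congr 2
    rw [Matrix.mul_add, Matrix.trace_add]
    ring
  have hsum : ∑ S, w S = (Fintype.card (Matrix (Fin b) (Fin a) F) : ℂ) • v := by
    simp only [w]
    rw [Finset.sum_comm]
    simp only [← Finset.sum_smul]
    rw [Finset.sum_eq_single 0]
    · simp [uU_zero]
    · intro X _ hX
      let ψ : AddChar (Matrix (Fin b) (Fin a) F) ℂ :=
        { toFun := fun S => χ₀ (-(S * X).trace)
          map_zero_eq_one' := by simp
          map_add_eq_mul' := by
            intro S S'
            rw [← AddChar.map_add_eq_mul, Matrix.add_mul, Matrix.trace_add, neg_add] }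
      have hψ : ψ ≠ 0 := by
        intro h0
        apply hX
        rw [Matrix.ext_iff_trace_mul_left]
        intro S
        rw [Matrix.mul_zero, Matrix.trace_zero]
        apply char_nondeg χ₀ hχ₀
        intro c
        have : ψ (-(c • S)) = 1 := by rw [h0]; rfl
        simpa [ψ] using this
      have := AddChar.sum_eq_ite ψ
      rw [if_neg hψ] at this
      have h2 : ∑ S : Matrix (Fin b) (Fin a) F, χ₀ (-(S * X).trace) = 0 := this
      rw [h2, zero_smul]
    · simp
  by_contra hcon
  push Not at hcon
  have hz : ∀ S, w S = 0 := by
    intro S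
    by_contra h0
    exact hcon S ⟨w S, h0, hw S⟩
  simp only [hz, Finset.sum_const_zero] at hsum
  have := (smul_eq_zero.1 hsum.symm)
  rcases this with h | h
  · simp at h
  · exact hv h

lemma lambdaRep_apply {n k : ℕ} (g : GL (Fin n) F) (f : Matrix (Fin n) (Fin k) F → ℂ)
    (T : Matrix (Fin n) (Fin k) F) : lambdaRep n k g f T = f (g⁻¹.1 * T) := by
  show f _ = _
  simp

lemma rRep_apply {n k : ℕ} (g : GL (Fin k) F) (f : Matrix (Fin n) (Fin k) F → ℂ)
    (T : Matrix (Fin n) (Fin k) F) : rRep n k g f T = f (T * g.1) := by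
  show f _ = _
  simp

lemma uU_inv_mul {n a b k : ℕ} (h : a + b = n) (X : Matrix (Fin a) (Fin b) F)
    (T : Matrix (Fin n) (Fin k) F) :
    (uU n a b h.le X)⁻¹.1 * T = T - incM F n a 0 * (X * ((incM F n b a)ᵀ * T)) := by
  have : (uU n a b h.le X)⁻¹.1 = 1 - blockEmbed n a b X := rfl
  rw [this, blockEmbed_eq n a b h, Matrix.sub_mul, Matrix.one_mul]
  simp only [Matrix.mul_assoc]

lemma IsEig.factor {χ₀ : AddChar F ℂ} (hχ₀ : χ₀ ≠ 1) {n a b k : ℕ} (h : a + b = n)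
    {S : Matrix (Fin b) (Fin a) F} {f : Matrix (Fin n) (Fin k) F → ℂ}
    (hf : IsEig χ₀ (lambdaRep n k) h.le S f) {T : Matrix (Fin n) (Fin k) F} (hT : f T ≠ 0) :
    ∃ C : Matrix (Fin k) (Fin a) F, S = (incM F n b a)ᵀ * T * C := by
  set T2 := (incM F n b a)ᵀ * T with hT2
  obtain ⟨G, hG⟩ := exists_ginv T2
  refine ⟨G * S, ?_⟩
  have key : (1 - T2 * G) * S = 0 := by
    rw [Matrix.ext_iff_trace_mul_right]
    intro Y
    rw [Matrix.zero_mul, Matrix.trace_zero]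
    apply char_nondeg χ₀ hχ₀
    intro c
    have h1 := congrFun (hf (c • (Y * (1 - T2 * G)))) T
    rw [lambdaRep_apply, uU_inv_mul h, ← hT2] at h1
    have h2 : c • (Y * (1 - T2 * G)) * T2 = 0 := by
      rw [Matrix.smul_mul, Matrix.mul_assoc, Matrix.sub_mul, hG]; simp
    rw [h2, Matrix.mul_zero, sub_zero, Pi.smul_apply, smul_eq_mul] at h1
    have h3 := mul_right_cancel₀ hT ((one_mul (f T)).trans h1)
    rw [h3]
    congr 1
    rw [Matrix.mul_smul, Matrix.trace_smul, smul_eq_mul, Matrix.mul_assoc, Matrix.trace_mul_comm,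
      Matrix.mul_assoc]
  rw [Matrix.sub_mul, Matrix.one_mul, sub_eq_zero] at key
  rw [← Matrix.mul_assoc]
  exact key

lemma IsEig.rank_le {χ₀ : AddChar F ℂ} (hχ₀ : χ₀ ≠ 1) {n a b k : ℕ} (h : a + b = n)
    {S : Matrix (Fin b) (Fin a) F} {f : Matrix (Fin n) (Fin k) F → ℂ}
    (hf : IsEig χ₀ (lambdaRep n k) h.le S f) (hf0 : f ≠ 0) : S.rank ≤ k := by
  obtain ⟨T, hT⟩ := Function.ne_iff.1 hf0
  obtain ⟨C, hC⟩ := hf.factor hχ₀ h hT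
  rw [hC]
  exact (Matrix.rank_mul_le_left _ _).trans ((Matrix.rank_le_width _))

/-- The base point. -/
def T0 (F : Type) [Field F] (n a b k : ℕ) : Matrix (Fin n) (Fin k) F :=
  incM F n b a * incM F b k 0

lemma IsEig.exists_ne {χ₀ : AddChar F ℂ} (hχ₀ : χ₀ ≠ 1) {n a b k : ℕ} (h : a + b = n)
    (ha : k ≤ a) (hb : k ≤ b)
    {f : Matrix (Fin n) (Fin k) F → ℂ}
    (hf : IsEig χ₀ (lambdaRep n k) h.le (S0 F a b k) f) (hf0 : f ≠ 0) :
    ∃ m : GL (Fin k) F, f (T0 F n a b k * m.1) ≠ 0 := by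
  obtain ⟨T, hT⟩ := Function.ne_iff.1 hf0
  obtain ⟨C, hC⟩ := hf.factor hχ₀ h hT
  have h5 := incM_add (F := F) n a b h
  set T2 := (incM F n b a)ᵀ * T with hT2
  have hB := incM_tr_mul (F := F) b k 0 (by omega)
  have e1 : incM F b k 0 = T2 * (C * incM F a k 0) := by
    rw [← Matrix.mul_assoc, ← hC, S0, Matrix.mul_assoc, incM_tr_mul a k 0 (by omega),
      Matrix.mul_one]
  have e2 : ((incM F b k 0)ᵀ * T2) * (C * incM F a k 0) = 1 := by
    rw [Matrix.mul_assoc, ← e1, hB]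
  have e3 := mul_eq_one_comm.1 e2
  let m : GL (Fin k) F :=
    { val := (incM F b k 0)ᵀ * T2
      inv := C * incM F a k 0
      val_inv := e2
      inv_val := e3 }
  have e4 : incM F b k 0 * m.1 = T2 := by
    conv_lhs => rw [e1]
    rw [Matrix.mul_assoc]
    show T2 * ((C * incM F a k 0) * ((incM F b k 0)ᵀ * T2)) = T2
    rw [e3, Matrix.mul_one]
  refine ⟨m, ?_⟩
  have h1 := congrFun (hf ((incM F n a 0)ᵀ * T * m⁻¹.1 * (incM F b k 0)ᵀ)) T
  rw [lambdaRep_apply, uU_inv_mul h, ← hT2] at h1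
  have e5 : (incM F n a 0)ᵀ * T * m⁻¹.1 * (incM F b k 0)ᵀ * T2 = (incM F n a 0)ᵀ * T := by
    rw [Matrix.mul_assoc]
    show (incM F n a 0)ᵀ * T * m⁻¹.1 * m.1 = _
    rw [Matrix.mul_assoc, Units.inv_mul, Matrix.mul_one]
  have e6 : T - incM F n a 0 * ((incM F n a 0)ᵀ * T) = T0 F n a b k * m.1 := by
    rw [T0, Matrix.mul_assoc, e4, hT2, ← Matrix.mul_assoc, ← Matrix.mul_assoc, sub_eq_iff_eq_add',
      ← Matrix.add_mul, h5, Matrix.one_mul]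
  rw [e5, e6] at h1
  rw [h1, Pi.smul_apply, smul_eq_mul]
  refine mul_ne_zero ?_ hT
  exact (AddChar.val_isUnit χ₀ _).ne_zero

/-- The basic eigenfunction. -/
noncomputable def f0 (χ₀ : AddChar F ℂ) (n a b k : ℕ) : Matrix (Fin n) (Fin k) F → ℂ :=
  fun T => if (incM F n b a)ᵀ * T = incM F b k 0 then
    χ₀ (-((incM F a k 0)ᵀ * ((incM F n a 0)ᵀ * T)).trace) else 0

lemma f0_eig (χ₀ : AddChar F ℂ) {n a b k : ℕ} (h : a + b = n) :
    IsEig χ₀ (lambdaRep n k) h.le (S0 F a b k) (f0 χ₀ n a b k) := by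
  intro X
  funext T
  rw [lambdaRep_apply, uU_inv_mul h, Pi.smul_apply, smul_eq_mul]
  have h1 := incM_tr_mul (F := F) n a 0 (by omega)
  have h4 := incM_tr_mul_zero' (F := F) n a b
  simp only [f0]
  have e1 : (incM F n b a)ᵀ * (T - incM F n a 0 * (X * ((incM F n b a)ᵀ * T)))
      = (incM F n b a)ᵀ * T := by
    rw [Matrix.mul_sub, ← Matrix.mul_assoc _ (incM F n a 0), h4]; simp
  have e2 : (incM F n a 0)ᵀ * (T - incM F n a 0 * (X * ((incM F n b a)ᵀ * T)))
      = (incM F n a 0)ᵀ * T - X * ((incM F n b a)ᵀ * T) := by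
    rw [Matrix.mul_sub, ← Matrix.mul_assoc _ (incM F n a 0), h1]; simp
  rw [e1, e2]
  split_ifs with hT
  · rw [hT, ← AddChar.map_add_eq_mul]
    congr 1
    rw [Matrix.mul_sub, Matrix.trace_sub, S0, Matrix.mul_assoc, Matrix.trace_mul_comm (incM F b k 0),
      Matrix.mul_assoc]
    ring
  · simp

lemma f0_T0 (χ₀ : AddChar F ℂ) {n a b k : ℕ} (h : a + b = n) (hb : k ≤ b) (m : GL (Fin k) F) :
    f0 χ₀ n a b k (T0 F n a b k * m.1) = if m = 1 then 1 else 0 := by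
  have h2 := incM_tr_mul (F := F) n b a (by omega)
  have h3 := incM_tr_mul_zero (F := F) n a b
  have hB := incM_tr_mul (F := F) b k 0 (by omega)
  have e1 : (incM F n b a)ᵀ * (T0 F n a b k * m.1) = incM F b k 0 * m.1 := by
    rw [T0, ← Matrix.mul_assoc, ← Matrix.mul_assoc, h2, Matrix.one_mul]
  have e2 : (incM F n a 0)ᵀ * (T0 F n a b k * m.1) = 0 := by
    rw [T0, ← Matrix.mul_assoc, ← Matrix.mul_assoc, h3, Matrix.zero_mul, Matrix.zero_mul]
  simp only [f0]
  rw [e1, e2]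
  have e3 : incM F b k 0 * m.1 = incM F b k 0 ↔ m = 1 := by
    constructor
    · intro h
      have := congrArg (fun M => (incM F b k 0)ᵀ * M) h
      simp only [← Matrix.mul_assoc, hB, Matrix.one_mul] at this
      exact Units.ext this
    · rintro rfl; simp
  simp [e3]

lemma f0_ne_zero (χ₀ : AddChar F ℂ) {n a b k : ℕ} (h : a + b = n) (hb : k ≤ b) :
    f0 χ₀ n a b k ≠ 0 := by
  intro h0
  have := f0_T0 (F := F) χ₀ h hb 1
  rw [h0] at this
  simp at this

/-! ### The representation `Ξ_ν` -/

section Xi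

variable {Vν : Type} [AddCommGroup Vν] [Module ℂ Vν] {n a b k : ℕ}

lemma XiRep_apply (ν : Representation ℂ (GL (Fin k) F) Vν) (g : GL (Fin n) F)
    (φ : interSub ν (rRep n k)) (v : Vν) :
    (XiRep n k ν g φ).1 v = lambdaRep n k g (φ.1 v) := rfl

lemma IsEig.xi_apply {χ₀ : AddChar F ℂ} {ν : Representation ℂ (GL (Fin k) F) Vν}
    {hab : a + b ≤ n} {S : Matrix (Fin b) (Fin a) F} {φ : interSub ν (rRep n k)}
    (hφ : IsEig χ₀ (XiRep n k ν) hab S φ) (v : Vν) :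
    IsEig χ₀ (lambdaRep n k) hab S (φ.1 v) := by
  intro X
  rw [← XiRep_apply, hφ X]
  rfl

/-- Evaluation at the base point. -/
def evL (a b : ℕ) (ν : Representation ℂ (GL (Fin k) F) Vν) :
    interSub ν (rRep n k) →ₗ[ℂ] Module.Dual ℂ Vν where
  toFun φ := (LinearMap.proj (T0 F n a b k)).comp φ.1
  map_add' φ ψ := rfl
  map_smul' c φ := rfl

lemma evL_apply (ν : Representation ℂ (GL (Fin k) F) Vν) (φ : interSub ν (rRep n k)) (v : Vν) :
    evL a b ν φ v = φ.1 v (T0 F n a b k) := rfl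

lemma inter_apply_mul (ν : Representation ℂ (GL (Fin k) F) Vν) (φ : interSub ν (rRep n k))
    (v : Vν) (m : GL (Fin k) F) :
    φ.1 v (T0 F n a b k * m.1) = evL a b ν φ (ν m v) := by
  rw [evL_apply, φ.2 m v, rRep_apply]

lemma Xi_inj {χ₀ : AddChar F ℂ} (hχ₀ : χ₀ ≠ 1) (h : a + b = n) (ha : k ≤ a) (hb : k ≤ b)
    (ν : Representation ℂ (GL (Fin k) F) Vν) {φ : interSub ν (rRep n k)}
    (hφ : IsEig χ₀ (XiRep n k ν) h.le (S0 F a b k) φ) (h0 : evL a b ν φ = 0) : φ = 0 := by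
  apply Subtype.ext
  refine LinearMap.ext fun v => ?_
  by_contra hv
  obtain ⟨m, hm⟩ := (hφ.xi_apply v).exists_ne hχ₀ h ha hb hv
  apply hm
  rw [inter_apply_mul, h0]
  rfl

lemma Xi_exists (χ₀ : AddChar F ℂ) (h : a + b = n) (hb : k ≤ b)
    (ν : Representation ℂ (GL (Fin k) F) Vν) (l : Module.Dual ℂ Vν) :
    ∃ φ : interSub ν (rRep n k),
      IsEig χ₀ (XiRep n k ν) h.le (S0 F a b k) φ ∧ evL a b ν φ = l := by
  classical
  haveI : Fintype (GL (Fin k) F) := Fintype.ofFinite _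
  let φ : Vν →ₗ[ℂ] (Matrix (Fin n) (Fin k) F → ℂ) :=
    ∑ m : GL (Fin k) F, (l.comp (ν m)).smulRight (rRep n k m⁻¹ (f0 χ₀ n a b k))
  have hφv : ∀ v, φ v = ∑ m : GL (Fin k) F, l (ν m v) • (rRep n k m⁻¹ (f0 χ₀ n a b k)) := by
    intro v
    simp [φ, LinearMap.sum_apply]
  have hφ : φ ∈ interSub ν (rRep n k) := by
    intro m v
    rw [hφv, hφv, map_sum]
    refine Fintype.sum_equiv (Equiv.mulRight m) _ _ fun x => ?_
    rw [map_smul, ← Module.End.mul_apply (rRep n k m), ← map_mul]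
    simp [map_mul]
  refine ⟨⟨φ, hφ⟩, ?_, ?_⟩
  · intro X
    apply Subtype.ext
    refine LinearMap.ext fun v => ?_
    rw [XiRep_apply]
    show lambdaRep n k _ (φ v) = χ₀ ((S0 F a b k * X).trace) • φ v
    rw [hφv, map_sum, Finset.smul_sum]
    refine Finset.sum_congr rfl fun m _ => ?_
    rw [map_smul, ← Module.End.mul_apply, lambda_r_comm, Module.End.mul_apply, f0_eig χ₀ h X,
      map_smul, smul_comm]
  · refine LinearMap.ext fun v => ?_
    rw [evL_apply]
    show φ v _ = _
    rw [hφv, Finset.sum_apply, Finset.sum_eq_single 1]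
    · rw [Pi.smul_apply, rRep_apply, f0_T0 χ₀ h hb]
      simp
    · intro m _ hm
      rw [Pi.smul_apply, rRep_apply, f0_T0 χ₀ h hb, if_neg (by simpa using hm)]
      simp
    · simp

/-- The stabilizer element attached to `m`. -/
def gStab (h : a + b = n) (ha : k ≤ a) (hb : k ≤ b) (m : GL (Fin k) F) : GL (Fin n) F :=
  gLevi n a b h (extGL ha m) (extGL hb m)

lemma gStab_mul (h : a + b = n) (ha : k ≤ a) (hb : k ≤ b) (m : GL (Fin k) F) :
    (gStab h ha hb m).1 * T0 F n a b k = T0 F n a b k * m.1 := by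
  have h2 := incM_tr_mul (F := F) n b a (by omega)
  have h3 := incM_tr_mul_zero (F := F) n a b
  simp only [gStab, gLevi, T0]
  rw [Matrix.add_mul, ← Matrix.mul_assoc, ← Matrix.mul_assoc, Matrix.mul_assoc _ _ (incM F n b a),
    Matrix.mul_assoc _ _ (incM F n b a), h2, h3, Matrix.mul_zero, Matrix.zero_mul, zero_add,
    Matrix.mul_one, Matrix.mul_assoc, extGL_mul, Matrix.mul_assoc]

lemma gStab_inv_mul (h : a + b = n) (ha : k ≤ a) (hb : k ≤ b) (m : GL (Fin k) F) :
    (gStab h ha hb m)⁻¹.1 * T0 F n a b k = T0 F n a b k * m⁻¹.1 := by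
  have h1 : T0 F n a b k = (gStab h ha hb m).1 * T0 F n a b k * m⁻¹.1 := by
    rw [gStab_mul, Matrix.mul_assoc, Units.mul_inv, Matrix.mul_one]
  conv_lhs => rw [h1]
  rw [← Matrix.mul_assoc, ← Matrix.mul_assoc, Units.inv_mul, Matrix.one_mul]

lemma IsEig.stab {χ₀ : AddChar F ℂ} {π : Representation ℂ (GL (Fin n) F) V}
    (h : a + b = n) (ha : k ≤ a) (hb : k ≤ b) {v : V}
    (hv : IsEig χ₀ π h.le (S0 F a b k) v) (m : GL (Fin k) F) :
    IsEig χ₀ π h.le (S0 F a b k) (π (gStab h ha hb m) v) := by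
  have := IsEig.levi h hv (extGL ha m) (extGL hb m)
  rwa [extGL_S0] at this

lemma evL_stab (h : a + b = n) (ha : k ≤ a) (hb : k ≤ b)
    (ν : Representation ℂ (GL (Fin k) F) Vν) (φ : interSub ν (rRep n k)) (m : GL (Fin k) F) :
    evL a b ν (XiRep n k ν (gStab h ha hb m) φ) = (evL a b ν φ).comp (ν m⁻¹) := by
  refine LinearMap.ext fun v => ?_
  rw [evL_apply, XiRep_apply, lambdaRep_apply, gStab_inv_mul, inter_apply_mul]
  rfl

/-- Invariant nonzero subspaces of the dual of an irreducible representation are everything. -/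
lemma dual_irred {G : Type} [Group G] [FiniteDimensional ℂ Vν] (ν : Representation ℂ G Vν)
    (hν : IsIrred ν) (L : Submodule ℂ (Module.Dual ℂ Vν))
    (hL : ∀ m : G, ∀ l ∈ L, l.comp (ν m) ∈ L) (hL0 : ∃ l ∈ L, l ≠ 0) : L = ⊤ := by
  have h1 := hν.2 L.dualCoannihilator (by
    intro g v hv
    rw [Submodule.mem_dualCoannihilator] at hv ⊢
    intro l hl
    exact hv _ (hL g l hl))
  rcases h1 with h1 | h1
  · rw [← Subspace.dualCoannihilator_dualAnnihilator_eq (W := L), h1]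
    exact Submodule.dualAnnihilator_bot
  · exfalso
    obtain ⟨l, hl, hl0⟩ := hL0
    apply hl0
    refine LinearMap.ext fun v => ?_
    have : v ∈ L.dualCoannihilator := by rw [h1]; trivial
    rw [Submodule.mem_dualCoannihilator] at this
    exact this l hl

lemma Xi_rank_le {χ₀ : AddChar F ℂ} (hχ₀ : χ₀ ≠ 1)
    (h : a + b = n) (ν : Representation ℂ (GL (Fin k) F) Vν)
    {φ : interSub ν (rRep n k)} {S : Matrix (Fin b) (Fin a) F}
    (hφ : IsEig χ₀ (XiRep n k ν) h.le S φ) (hφ0 : φ ≠ 0) : S.rank ≤ k := by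
  have : ∃ v, φ.1 v ≠ 0 := by
    by_contra hcon
    push Not at hcon
    exact hφ0 (Subtype.ext (LinearMap.ext hcon))
  obtain ⟨v, hv⟩ := this
  exact (hφ.xi_apply v).rank_le hχ₀ h hv

end Xi

/-- The properties of `Ξ_ν` used below. -/
structure Good (χ₀ : AddChar F ℂ) {Vν W : Type} [AddCommGroup Vν] [Module ℂ Vν]
    [AddCommGroup W] [Module ℂ W] {n a b k : ℕ} (h : a + b = n) (ha : k ≤ a) (hb : k ≤ b)
    (ν : Representation ℂ (GL (Fin k) F) Vν) (π : Representation ℂ (GL (Fin n) F) W)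
    (ev : W →ₗ[ℂ] Module.Dual ℂ Vν) : Prop where
  inj : ∀ x, IsEig χ₀ π h.le (S0 F a b k) x → ev x = 0 → x = 0
  ex : ∀ l, ∃ x, IsEig χ₀ π h.le (S0 F a b k) x ∧ ev x = l
  stab : ∀ m x, ev (π (gStab h ha hb m) x) = (ev x).comp (ν m⁻¹)
  rank : ∀ x S, IsEig χ₀ π h.le S x → x ≠ 0 → S.rank ≤ k


lemma subRep_eig {χ₀ : AddChar F ℂ} {n : ℕ} {π : Representation ℂ (GL (Fin n) F) V}
    {a b : ℕ} {hab : a + b ≤ n} {S : Matrix (Fin b) (Fin a) F} {N : Submodule ℂ V}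
    {hN : ∀ g, ∀ v ∈ N, π g v ∈ N} (x : N) :
    IsEig χ₀ (subRep π N hN) hab S x ↔ IsEig χ₀ π hab S x.1 := by
  constructor
  · intro hx X
    exact congrArg Subtype.val (hx X)
  · intro hx X
    exact Subtype.ext (hx X)

lemma maschke {G W : Type} [Group G] [Finite G] [AddCommGroup W] [Module ℂ W]
    (π : Representation ℂ G W) (p : Submodule ℂ W) (hp : ∀ g, ∀ v ∈ p, π g v ∈ p) :
    ∃ q : Submodule ℂ W, (∀ g, ∀ v ∈ q, π g v ∈ q) ∧ IsCompl p q := by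
  haveI : NeZero (Nat.card G : ℂ) := ⟨by exact_mod_cast Nat.card_pos.ne'⟩
  haveI : Representation.IsSemisimpleRepresentation π := inferInstance
  obtain ⟨q, hq⟩ := exists_isCompl (⟨p, fun g v hv => hp g v hv⟩ : Subrepresentation π)
  refine ⟨q.toSubmodule, fun g v hv => q.apply_mem_toSubmodule g hv, ?_⟩
  constructor
  · rw [disjoint_iff]
    exact congrArg Subrepresentation.toSubmodule hq.inf_eq_bot
  · rw [codisjoint_iff]
    exact congrArg Subrepresentation.toSubmodule hq.sup_eq_top

lemma subRep_irred_le {G W : Type} [Group G] [AddCommGroup W] [Module ℂ W]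
    {π : Representation ℂ G W} {N : Submodule ℂ W} {hN : ∀ g, ∀ v ∈ N, π g v ∈ N}
    (hirr : IsIrred (subRep π N hN)) (p : Submodule ℂ W) (hp : ∀ g, ∀ v ∈ p, π g v ∈ p)
    (hpN : p ≤ N) (hp0 : ∃ x ∈ p, x ≠ 0) : p = N := by
  have := hirr.2 (p.comap N.subtype) (fun g v hv => hp g v.1 hv)
  rcases this with h | h
  · exfalso
    obtain ⟨x, hx, hx0⟩ := hp0
    have h2 : (⟨x, hpN hx⟩ : N) ∈ p.comap N.subtype := hx
    rw [h] at h2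
    exact hx0 (congrArg Subtype.val ((Submodule.mem_bot ℂ).1 h2))
  · apply le_antisymm hpN
    intro x hx
    have h2 : (⟨x, hx⟩ : N) ∈ p.comap N.subtype := by rw [h]; trivial
    exact h2

section main

variable {Vν : Type} [AddCommGroup Vν] [Module ℂ Vν] [FiniteDimensional ℂ Vν]
  {W : Type} [AddCommGroup W] [Module ℂ W] {n a b k : ℕ}

lemma exists_dual_ne (ν : Representation ℂ (GL (Fin k) F) Vν) (hν : IsIrred ν) :
    ∃ l : Module.Dual ℂ Vν, l ≠ 0 := by
  obtain ⟨v, hv⟩ := hν.1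
  by_contra hcon
  push Not at hcon
  exact hv ((Module.forall_dual_apply_eq_zero_iff ℂ v).1 fun l => by rw [hcon l]; rfl)

/-- An invariant subspace meeting the eigenspace contains it. -/
lemma Xi_eig_le {χ₀ : AddChar F ℂ} {h : a + b = n} {ha : k ≤ a} {hb : k ≤ b}
    {ν : Representation ℂ (GL (Fin k) F) Vν} {π : Representation ℂ (GL (Fin n) F) W}
    {ev : W →ₗ[ℂ] Module.Dual ℂ Vν} (hG : Good χ₀ h ha hb ν π ev) (hν : IsIrred ν)
    (N : Submodule ℂ W) (hN : ∀ g, ∀ x ∈ N, π g x ∈ N)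
    {φ : W} (hφN : φ ∈ N) (hφ0 : φ ≠ 0)
    (hφ : IsEig χ₀ π h.le (S0 F a b k) φ)
    {ψ : W}
    (hψ : IsEig χ₀ π h.le (S0 F a b k) ψ) : ψ ∈ N := by
  let L : Submodule ℂ (Module.Dual ℂ Vν) :=
    { carrier := {l | ∃ x ∈ N, IsEig χ₀ π h.le (S0 F a b k) x ∧ ev x = l}
      add_mem' := by
        rintro _ _ ⟨x, hx, hx1, rfl⟩ ⟨y, hy, hy1, rfl⟩
        refine ⟨x + y, N.add_mem hx hy, ?_, map_add _ _ _⟩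
        intro X
        rw [map_add, hx1, hy1, smul_add]
      zero_mem' := ⟨0, N.zero_mem, by intro X; simp, map_zero _⟩
      smul_mem' := by
        rintro c _ ⟨x, hx, hx1, rfl⟩
        refine ⟨c • x, N.smul_mem _ hx, ?_, map_smul _ _ _⟩
        intro X
        rw [map_smul, hx1, smul_comm] }
  have hL : L = ⊤ := by
    apply dual_irred ν hν
    · rintro m _ ⟨x, hx, hx1, rfl⟩
      refine ⟨π (gStab h ha hb m⁻¹) x, hN _ _ hx, hx1.stab h ha hb _, ?_⟩
      rw [hG.stab, inv_inv]
    · exact ⟨_, ⟨φ, hφN, hφ, rfl⟩, fun h0 => hφ0 (hG.inj _ hφ h0)⟩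
  have hψL : ev ψ ∈ L := by rw [hL]; trivial
  obtain ⟨x, hx, hx1, hx2⟩ := hψL
  have : x - ψ = 0 := by
    apply hG.inj
    · intro X
      rw [map_sub, hx1, hψ, smul_sub]
    · rw [map_sub, hx2, sub_self]
  rw [← sub_eq_zero.1 this]
  exact hx

lemma Xi_exists_ne {χ₀ : AddChar F ℂ} {h : a + b = n} {ha : k ≤ a} {hb : k ≤ b}
    {ν : Representation ℂ (GL (Fin k) F) Vν} {π : Representation ℂ (GL (Fin n) F) W}
    {ev : W →ₗ[ℂ] Module.Dual ℂ Vν} (hG : Good χ₀ h ha hb ν π ev) (hν : IsIrred ν) :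
    ∃ φ : W, φ ≠ 0 ∧ IsEig χ₀ π h.le (S0 F a b k) φ := by
  obtain ⟨l, hl⟩ := exists_dual_ne ν hν
  obtain ⟨φ, hφ, h1⟩ := hG.ex l
  refine ⟨φ, ?_, hφ⟩
  rintro rfl
  exact hl (by rw [← h1, map_zero])

/-- The rank `k` subrepresentations contain the standard eigenspace. -/
lemma eig_mem {χ₀ : AddChar F ℂ} {h : a + b = n} {ha : k ≤ a} {hb : k ≤ b}
    {ν : Representation ℂ (GL (Fin k) F) Vν} {π : Representation ℂ (GL (Fin n) F) W}
    {ev : W →ₗ[ℂ] Module.Dual ℂ Vν} (hG : Good χ₀ h ha hb ν π ev) (hν : IsIrred ν)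
    (N : Submodule ℂ W) (hN : ∀ g, ∀ x ∈ N, π g x ∈ N)
    (hr : HasRankAB χ₀ (subRep π N hN) h.le k)
    {ψ : W}
    (hψ : IsEig χ₀ π h.le (S0 F a b k) ψ) : ψ ∈ N := by
  obtain ⟨⟨S, hS, hSr⟩, -⟩ := hr
  obtain ⟨x, hx0, hx⟩ := hS.to_S0 h ha hb hSr
  exact Xi_eig_le hG hν N hN x.2 (fun h0 => hx0 (Subtype.ext h0))
    ((subRep_eig x).1 hx) hψ

lemma part2a {χ₀ : AddChar F ℂ} {h : a + b = n} {ha : k ≤ a} {hb : k ≤ b}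
    {ν : Representation ℂ (GL (Fin k) F) Vν} {π : Representation ℂ (GL (Fin n) F) W}
    {ev : W →ₗ[ℂ] Module.Dual ℂ Vν} (hG : Good χ₀ h ha hb ν π ev) (hν : IsIrred ν) :
    ∃! N : Submodule ℂ W,
          ∃ hN : ∀ g, ∀ x ∈ N, π g x ∈ N,
            IsIrred (subRep π N hN) ∧
              HasRankAB χ₀ (subRep π N hN) h.le k := by
  obtain ⟨φ, hφ0, hφ⟩ := Xi_exists_ne hG hν
  let N : Submodule ℂ W :=
    Submodule.span ℂ (Set.range fun g => π g φ)
  have hN : ∀ g, ∀ x ∈ N, π g x ∈ N := by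
    intro g x hx
    induction hx using Submodule.span_induction with
    | mem x hx =>
      obtain ⟨g', rfl⟩ := hx
      refine Submodule.subset_span ⟨g * g', ?_⟩
      show π (g * g') φ = _
      rw [map_mul]; rfl
    | zero => rw [map_zero]; exact N.zero_mem
    | add x y _ _ hx hy => rw [map_add]; exact N.add_mem hx hy
    | smul c x _ hx => rw [map_smul]; exact N.smul_mem c hx
  have hφN : φ ∈ N := Submodule.subset_span ⟨1, by simp⟩
  have hNmin : ∀ p : Submodule ℂ W,
      (∀ g, ∀ x ∈ p, π g x ∈ p) → φ ∈ p → N ≤ p := by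
    intro p hp hφp
    refine Submodule.span_le.2 ?_
    rintro _ ⟨g, rfl⟩
    exact hp g φ hφp
  refine ⟨N, ⟨hN, ⟨⟨⟨φ, hφN⟩, fun h0 => hφ0 (congrArg Subtype.val h0)⟩, ?_⟩,
    ⟨S0 F a b k, ⟨⟨φ, hφN⟩, fun h0 => hφ0 (congrArg Subtype.val h0), ?_⟩, S0_rank ha hb⟩, ?_⟩, ?_⟩
  · intro p hp
    have hp' : ∀ g, ∀ x ∈ p.map N.subtype, π g x ∈ p.map N.subtype := by
      rintro g _ ⟨x, hx, rfl⟩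
      exact ⟨_, hp g x hx, rfl⟩
    obtain ⟨q, hq, hpq⟩ := maschke π _ hp'
    have hφtop : φ ∈ p.map N.subtype ⊔ q := by rw [hpq.sup_eq_top]; trivial
    obtain ⟨x, hx, y, hy, hxy⟩ := Submodule.mem_sup.1 hφtop
    have hxe : IsEig χ₀ π h.le (S0 F a b k) x := by
      intro X
      have h1 := hφ X
      rw [← hxy, map_add, smul_add] at h1
      have h2 : π (uU n a b h.le X) x - χ₀ ((S0 F a b k * X).trace) • x
          = χ₀ ((S0 F a b k * X).trace) • y - π (uU n a b h.le X) y := by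
        rw [sub_eq_sub_iff_add_eq_add, h1, add_comm]
      have h3 : π (uU n a b h.le X) x - χ₀ ((S0 F a b k * X).trace) • x
          ∈ p.map N.subtype ⊓ q :=
        ⟨Submodule.sub_mem _ (hp' _ _ hx) (Submodule.smul_mem _ _ hx),
          by rw [h2]; exact Submodule.sub_mem _ (Submodule.smul_mem _ _ hy) (hq _ _ hy)⟩
      rw [hpq.inf_eq_bot] at h3
      exact sub_eq_zero.1 ((Submodule.mem_bot ℂ).1 h3)
    by_cases hx0 : x = 0
    · left
      rw [hx0, zero_add] at hxy
      have hNq : N ≤ q := hNmin q hq (hxy ▸ hy)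
      rw [Submodule.eq_bot_iff]
      intro z hz
      have h3 : z.1 ∈ p.map N.subtype ⊓ q := ⟨⟨z, hz, rfl⟩, hNq z.2⟩
      rw [hpq.inf_eq_bot] at h3
      exact Subtype.ext ((Submodule.mem_bot ℂ).1 h3)
    · right
      have hNp := hNmin _ hp' (Xi_eig_le hG hν _ hp' hx hx0 hxe hφ)
      rw [Submodule.eq_top_iff']
      intro z
      obtain ⟨w, hw, hwz⟩ := hNp z.2
      have : w = z := Subtype.ext hwz
      rwa [← this]
  · exact (subRep_eig (⟨φ, hφN⟩ : N)).2 hφ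
  · rintro S ⟨x, hx0, hx⟩
    exact hG.rank _ _ ((subRep_eig x).1 hx) (fun h0 => hx0 (Subtype.ext h0))
  · rintro N' ⟨hN', hirr, hr⟩
    have hφN' := eig_mem hG hν N' hN' hr hφ
    exact (subRep_irred_le hirr N hN (hNmin N' hN' hφN') ⟨φ, hφN, hφ0⟩).symm

lemma part2b {χ₀ : AddChar F ℂ} (hχ₀ : χ₀ ≠ 1) {h : a + b = n} {ha : k ≤ a} {hb : k ≤ b}
    {ν : Representation ℂ (GL (Fin k) F) Vν} {π : Representation ℂ (GL (Fin n) F) W}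
    {ev : W →ₗ[ℂ] Module.Dual ℂ Vν} (hG : Good χ₀ h ha hb ν π ev)
    (N : Submodule ℂ W) (hN : ∀ g, ∀ x ∈ N, π g x ∈ N)
    (hirr : IsIrred (subRep π N hN)) :
    ∃ k' ≤ k, HasRankAB χ₀ (subRep π N hN) h.le k' := by
  have hle : ∀ S, CharAppears χ₀ (subRep π N hN) h.le S → S.rank ≤ k := by
    rintro S ⟨x, hx0, hx⟩
    exact hG.rank _ _ ((subRep_eig x).1 hx) (fun h0 => hx0 (Subtype.ext h0))
  obtain ⟨v, hv⟩ := hirr.1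
  obtain ⟨S1, hS1⟩ := exists_charAppears χ₀ hχ₀ (subRep π N hN) h.le v hv
  obtain ⟨S, hS, hmax⟩ := Set.exists_max_image
    {S : Matrix (Fin b) (Fin a) F | CharAppears χ₀ (subRep π N hN) h.le S}
    (fun S => S.rank) (Set.toFinite _) ⟨S1, hS1⟩
  exact ⟨S.rank, hle S hS, ⟨S, hS, rfl⟩, hmax⟩

lemma part3 {W' : Type} [AddCommGroup W'] [Module ℂ W'] {Vν' : Type} [AddCommGroup Vν'] [Module ℂ Vν'] [FiniteDimensional ℂ Vν']
    {χ₀ : AddChar F ℂ} {h : a + b = n} {ha : k ≤ a} {hb : k ≤ b}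
    {ν : Representation ℂ (GL (Fin k) F) Vν} {π : Representation ℂ (GL (Fin n) F) W}
    {ev : W →ₗ[ℂ] Module.Dual ℂ Vν} (hG : Good χ₀ h ha hb ν π ev) (hν : IsIrred ν)
    {ν' : Representation ℂ (GL (Fin k) F) Vν'} {π' : Representation ℂ (GL (Fin n) F) W'}
    {ev' : W' →ₗ[ℂ] Module.Dual ℂ Vν'} (hG' : Good χ₀ h ha hb ν' π' ev') (hν' : IsIrred ν')
    (N : Submodule ℂ W) (hN : ∀ g, ∀ x ∈ N, π g x ∈ N)
    (N' : Submodule ℂ W') (hN' : ∀ g, ∀ x ∈ N', π' g x ∈ N')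
    (hr : HasRankAB χ₀ (subRep π N hN) h.le k)
    (he : RepEquiv (subRep π N hN) (subRep π' N' hN')) :
    RepEquiv ν ν' := by
  obtain ⟨e, he⟩ := he
  choose Φ hΦ hΦe using hG.ex
  have hΦu : ∀ (l : Module.Dual ℂ Vν) (x : W),
      IsEig χ₀ π h.le (S0 F a b k) x → ev x = l → Φ l = x := by
    intro l x hx hxl
    rw [← sub_eq_zero]
    apply hG.inj
    · intro X
      rw [map_sub, hΦ, hx, smul_sub]
    · rw [map_sub, hΦe, hxl, sub_self]
  have hΦN : ∀ l, Φ l ∈ N := fun l => eig_mem hG hν N hN hr (hΦ l)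
  let ΦL : Module.Dual ℂ Vν →ₗ[ℂ] N :=
    { toFun := fun l => ⟨Φ l, hΦN l⟩
      map_add' := by
        intro l l'
        apply Subtype.ext
        apply hΦu
        · intro X
          show π _ (Φ l + Φ l') = _ • (Φ l + Φ l')
          rw [map_add, hΦ, hΦ, smul_add]
        · show ev (Φ l + Φ l') = _
          rw [map_add, hΦe, hΦe]
      map_smul' := by
        intro c l
        apply Subtype.ext
        apply hΦu
        · intro X
          show π _ (c • Φ l) = _ • (c • Φ l)
          rw [map_smul, hΦ, smul_comm]
        · show ev (c • Φ l) = _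
          rw [map_smul, hΦe] }
  let Ψ : Module.Dual ℂ Vν →ₗ[ℂ] Module.Dual ℂ Vν' :=
    ev'.comp (N'.subtype.comp (e.toLinearMap.comp ΦL))
  have hΨ : ∀ l, Ψ l = ev' (e (ΦL l)).1 := fun l => rfl
  have heig : ∀ l, IsEig χ₀ π' h.le (S0 F a b k) (e (ΦL l)).1 := by
    intro l
    apply (subRep_eig (hN := hN') (e (ΦL l))).1
    intro X
    rw [← he, ((subRep_eig (hN := hN) (ΦL l)).2 (hΦ l)) X, map_smul]
  have hΨm : ∀ (m : GL (Fin k) F) l, Ψ (l.comp (ν m)) = (Ψ l).comp (ν' m) := by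
    intro m l
    have h1 : ΦL (l.comp (ν m)) = subRep π N hN (gStab h ha hb m⁻¹) (ΦL l) := by
      apply Subtype.ext
      apply hΦu
      · exact (hΦ l).stab h ha hb m⁻¹
      · show ev (π (gStab h ha hb m⁻¹) (Φ l)) = _
        rw [hG.stab, hΦe, inv_inv]
    rw [hΨ, hΨ, h1, he]
    show ev' (π' (gStab h ha hb m⁻¹) (e (ΦL l)).1) = _
    rw [hG'.stab, inv_inv]
  have hΨinj : ∀ l, Ψ l = 0 → l = 0 := by
    intro l hl
    have h1 : e (ΦL l) = 0 := Subtype.ext (hG'.inj _ (heig l) hl)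
    have h2 : ΦL l = 0 := by simpa using h1
    have h3 : Φ l = 0 := congrArg Subtype.val h2
    rw [← hΦe l, h3, map_zero]
  let θ : Vν' →ₗ[ℂ] Vν :=
    (Module.evalEquiv ℂ Vν).symm.toLinearMap.comp (Ψ.dualMap.comp (Module.Dual.eval ℂ Vν'))
  have hθ : ∀ (l : Module.Dual ℂ Vν) v, l (θ v) = Ψ l v := by
    intro l v
    have : Module.evalEquiv ℂ Vν (θ v) = Ψ.dualMap (Module.Dual.eval ℂ Vν' v) := by
      simp [θ]
    exact LinearMap.congr_fun this l
  have hθm : ∀ m v, θ (ν' m v) = ν m (θ v) := by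
    intro m v
    rw [← sub_eq_zero, ← Module.forall_dual_apply_eq_zero_iff ℂ]
    intro l
    rw [map_sub, sub_eq_zero, hθ]
    have h1 : l (ν m (θ v)) = (l.comp (ν m)) (θ v) := rfl
    rw [h1, hθ, hΨm]
    rfl
  have hθ0 : θ ≠ 0 := by
    intro h0
    obtain ⟨l, hl⟩ := exists_dual_ne ν hν
    apply hl
    apply hΨinj
    refine LinearMap.ext fun v => ?_
    rw [← hθ, h0]
    simp
  have hker : LinearMap.ker θ = ⊥ := by
    rcases hν'.2 (LinearMap.ker θ) (by
      intro g v hv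
      rw [LinearMap.mem_ker] at hv ⊢
      rw [hθm, hv, map_zero]) with h1 | h1
    · exact h1
    · exact absurd (LinearMap.ker_eq_top.1 h1) hθ0
  have hrange : LinearMap.range θ = ⊤ := by
    rcases hν.2 (LinearMap.range θ) (by
      rintro g _ ⟨v, rfl⟩
      exact ⟨ν' g v, hθm g v⟩) with h1 | h1
    · exact absurd (LinearMap.range_eq_bot.1 h1) hθ0
    · exact h1
  let E := LinearEquiv.ofBijective θ ⟨LinearMap.ker_eq_bot.1 hker, LinearMap.range_eq_top.1 hrange⟩
  refine ⟨E.symm, fun g v => ?_⟩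
  rw [LinearEquiv.symm_apply_eq]
  show _ = θ _
  rw [hθm]
  have : θ (E.symm v) = v := E.apply_symm_apply v
  rw [this]

end main


lemma Xi_good {Vν : Type} [AddCommGroup Vν] [Module ℂ Vν] {n a b k : ℕ}
    {χ₀ : AddChar F ℂ} (hχ₀ : χ₀ ≠ 1) (h : a + b = n) (ha : k ≤ a) (hb : k ≤ b)
    (ν : Representation ℂ (GL (Fin k) F) Vν) :
    Good (W := ↥(interSub ν (rRep n k))) χ₀ h ha hb ν (XiRep n k ν) (evL a b ν) where
  inj x hx h0 := Xi_inj hχ₀ h ha hb ν hx h0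
  ex l := Xi_exists χ₀ h hb ν l
  stab m x := evL_stab h ha hb ν x m
  rank x S hx h0 := Xi_rank_le hχ₀ h ν hx h0

/-- (Theorem 5.3.1 c)).  Here `k ≤ n/2` is expressed as
`2 * k ≤ n`. -/
theorem eta_correspondence_GL
    (χ₀ : AddChar F ℂ) (hχ₀ : χ₀ ≠ 1)
    {n k : ℕ} (hk : 2 * k ≤ n) :
    -- (1) the restriction of ω to GL_n has U-rank k
    HasURank χ₀ (lambdaRep n k) k ∧
    -- (2) for every irreducible representation ν of GL_k, the representation
    -- Ξ_ν contains a unique irreducible subrepresentation of U-rank k (in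
    -- particular it occurs with multiplicity one), and every irreducible
    -- constituent of Ξ_ν has U-rank at most k (hence, apart from η(ν),
    -- strictly smaller U-rank)
    (∀ (Vν : Type) [AddCommGroup Vν] [Module ℂ Vν] [FiniteDimensional ℂ Vν]
      (ν : Representation ℂ (GL (Fin k) F) Vν), IsIrred ν →
        (∃! N : Submodule ℂ ↥(interSub ν (rRep n k)),
          ∃ hN : ∀ g, ∀ x ∈ N, XiRep n k ν g x ∈ N,
            IsIrred (subRep (XiRep n k ν) N hN) ∧
              HasURank χ₀ (subRep (XiRep n k ν) N hN) k) ∧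
        (∀ (N : Submodule ℂ ↥(interSub ν (rRep n k)))
            (hN : ∀ g, ∀ x ∈ N, XiRep n k ν g x ∈ N),
          IsIrred (subRep (XiRep n k ν) N hN) →
            ∃ k' ≤ k, HasURank χ₀ (subRep (XiRep n k ν) N hN) k')) ∧
    -- (3) ν ↦ η(ν) is injective: if the rank-k irreducible constituents of
    -- Ξ_ν and Ξ_ν' are equivalent, then ν and ν' are equivalent
    (∀ (Vν Vν' : Type) [AddCommGroup Vν] [Module ℂ Vν] [FiniteDimensional ℂ Vν]
      [AddCommGroup Vν'] [Module ℂ Vν'] [FiniteDimensional ℂ Vν']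
      (ν : Representation ℂ (GL (Fin k) F) Vν)
      (ν' : Representation ℂ (GL (Fin k) F) Vν'),
      IsIrred ν → IsIrred ν' →
      ∀ (N : Submodule ℂ ↥(interSub ν (rRep n k)))
        (hN : ∀ g, ∀ x ∈ N, XiRep n k ν g x ∈ N)
        (N' : Submodule ℂ ↥(interSub ν' (rRep n k)))
        (hN' : ∀ g, ∀ x ∈ N', XiRep n k ν' g x ∈ N'),
        IsIrred (subRep (XiRep n k ν) N hN) →
        HasURank χ₀ (subRep (XiRep n k ν) N hN) k →
        IsIrred (subRep (XiRep n k ν') N' hN') →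
        HasURank χ₀ (subRep (XiRep n k ν') N' hN') k →
        RepEquiv (subRep (XiRep n k ν) N hN) (subRep (XiRep n k ν') N' hN') →
        RepEquiv ν ν') := by
  have h : n / 2 + (n - n / 2) = n := by omega
  have ha : k ≤ n / 2 := by omega
  have hb : k ≤ n - n / 2 := by omega
  refine ⟨⟨⟨S0 F _ _ k, ⟨f0 χ₀ n (n / 2) (n - n / 2) k, f0_ne_zero χ₀ h hb, f0_eig χ₀ h⟩,
    S0_rank ha hb⟩, ?_⟩, ?_, ?_⟩
  · rintro S ⟨f, hf0, hf⟩
    exact IsEig.rank_le hχ₀ h hf hf0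
  · intro Vν _ _ _ ν hν
    exact ⟨part2a (Xi_good hχ₀ h ha hb ν) hν, fun N hN hirr => part2b hχ₀ (Xi_good hχ₀ h ha hb ν) N hN hirr⟩
  · intro Vν Vν' _ _ _ _ _ _ ν ν' hν hν' N hN N' hN' _ hr _ _ he
    exact part3 (Xi_good hχ₀ h ha hb ν) hν (Xi_good hχ₀ h ha hb ν') hν' N hN N' hN' hr he

end Stmt7
end

section
/- Let π and ρ be finite-dimensional complex representations of GL_n(F_q) of U-ranks k and ℓ respectively, and suppose k + ℓ < n/2 − 1. Then the tensor product π ⊗ ρ has U-rank k + ℓ. -/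
/-!
STATEMENT 9: If π, ρ are finite-dimensional complex representations of GL_n(F_q)
of U-ranks k and ℓ respectively, and k + ℓ < n/2 − 1, then π ⊗ ρ has U-rank k + ℓ.
-/

open Matrix
open scoped MatrixGroups

set_option linter.unusedSectionVars false

namespace Stmt9

variable {F : Type} [Field F] [Fintype F] [DecidableEq F]

/-- The `n × n` matrix with the `a × b` matrix `X` placed in the block occupying
rows `0,…,a-1` and columns `n-b,…,n-1`, and `0` elsewhere. -/
def blockEmbed (n a b : ℕ) (X : Matrix (Fin a) (Fin b) F) : Matrix (Fin n) (Fin n) F :=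
  Matrix.of fun i j =>
    if hi : (i : ℕ) < a then
      if hj : n - b ≤ (j : ℕ) ∧ (j : ℕ) - (n - b) < b then
        X ⟨i, hi⟩ ⟨(j : ℕ) - (n - b), hj.2⟩
      else 0
    else 0

lemma blockEmbed_mul_blockEmbed {n a b : ℕ} (hab : a + b ≤ n)
    (X Y : Matrix (Fin a) (Fin b) F) :
    blockEmbed n a b X * blockEmbed n a b Y = 0 := by
  ext i j
  rw [Matrix.mul_apply, Matrix.zero_apply]
  apply Finset.sum_eq_zero
  intro k _
  rcases Nat.lt_or_ge (k : ℕ) a with hk | hk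
  · have h2 : ¬ (n - b ≤ (k : ℕ) ∧ (k : ℕ) - (n - b) < b) := by
      rintro ⟨h, -⟩; omega
    have hz : blockEmbed n a b X i k = 0 := by
      unfold blockEmbed
      by_cases hi : (i : ℕ) < a
      · rw [Matrix.of_apply, dif_pos hi, dif_neg h2]
      · rw [Matrix.of_apply, dif_neg hi]
    rw [hz, zero_mul]
  · have hz : blockEmbed n a b Y k j = 0 := by
      unfold blockEmbed
      rw [Matrix.of_apply, dif_neg (Nat.not_lt.2 hk)]
    rw [hz, mul_zero]

/-- The element `I_n + blockEmbed X` of `GL_n(F)`; for `a + b ≤ n` these elements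
form the abelian subgroup `U_{a,b}` (identified with `(M_{a,b}(F), +)`). -/
def uU (n a b : ℕ) (hab : a + b ≤ n) (X : Matrix (Fin a) (Fin b) F) : GL (Fin n) F where
  val := 1 + blockEmbed n a b X
  inv := 1 - blockEmbed n a b X
  val_inv := by
    have h := blockEmbed_mul_blockEmbed hab X X
    have e : (1 + blockEmbed n a b X) * (1 - blockEmbed n a b X)
        = 1 - blockEmbed n a b X * blockEmbed n a b X := by noncomm_ring
    rw [e, h, sub_zero]
  inv_val := by
    have h := blockEmbed_mul_blockEmbed hab X X
    have e : (1 - blockEmbed n a b X) * (1 + blockEmbed n a b X)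
        = 1 - blockEmbed n a b X * blockEmbed n a b X := by noncomm_ring
    rw [e, h, sub_zero]

variable {V : Type} [AddCommGroup V] [Module ℂ V]

/-- The character `γ_T` of `U_{a,b} ≅ M_{a,b}(F_q)`, `γ_T(X) = χ₀(trace (T*X))`,
appears in (the restriction to `U_{a,b}` of) the representation `π`, i.e. its
eigenspace is nonzero. -/
def CharAppears (χ₀ : AddChar F ℂ) {n : ℕ} (π : Representation ℂ (GL (Fin n) F) V)
    {a b : ℕ} (hab : a + b ≤ n) (T : Matrix (Fin b) (Fin a) F) : Prop :=
  ∃ v : V, v ≠ 0 ∧ ∀ X : Matrix (Fin a) (Fin b) F,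
    π (uU n a b hab X) v = χ₀ ((T * X).trace) • v

/-- `rank_{a,b}(π) = k` : the maximal rank of a character of `U_{a,b}`
appearing in `π|U_{a,b}` is `k`.  (The rank of `γ_T` is `rank T`.) -/
def HasRankAB (χ₀ : AddChar F ℂ) {n : ℕ} (π : Representation ℂ (GL (Fin n) F) V)
    {a b : ℕ} (hab : a + b ≤ n) (k : ℕ) : Prop :=
  (∃ T, CharAppears χ₀ π hab T ∧ T.rank = k) ∧
  (∀ T, CharAppears χ₀ π hab T → T.rank ≤ k)


/-- The `U`-rank of a representation `π` of `GL_n(F_q)` equals `k`: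
this is `rank_{⌊n/2⌋,⌈n/2⌉}(π) = k`. -/
def HasURank (χ₀ : AddChar F ℂ) {n : ℕ} (π : Representation ℂ (GL (Fin n) F) V) (k : ℕ) : Prop :=
  HasRankAB χ₀ π (show n / 2 + (n - n / 2) ≤ n by omega) k



/-! ### Linear algebra -/

lemma exists_equiv_comp {V W : Type*} [AddCommGroup V] [Module F V] [FiniteDimensional F V]
    [AddCommGroup W] [Module F W] [FiniteDimensional F W] (f g : V →ₗ[F] W)
    (h : Module.finrank F (LinearMap.range f) = Module.finrank F (LinearMap.range g)) :
    ∃ (A : V ≃ₗ[F] V) (B : W ≃ₗ[F] W), ∀ x, B (f x) = g (A x) := by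
  have hk : Module.finrank F (LinearMap.ker f) = Module.finrank F (LinearMap.ker g) := by
    have h1 := f.finrank_range_add_finrank_ker
    have h2 := g.finrank_range_add_finrank_ker
    omega
  obtain ⟨A, hA⟩ := Submodule.exists_linearEquiv_restrict_eq (LinearEquiv.ofFinrankEq _ _ hk)
  have hle : (LinearMap.ker f).map (A : V →ₗ[F] V) ≤ LinearMap.ker g := by
    rintro _ ⟨x, hx, rfl⟩
    have := hA ⟨x, hx⟩
    rw [LinearEquiv.coe_coe, ← this]
    exact Subtype.property _
  have hmap : (LinearMap.ker f).map (A : V →ₗ[F] V) = LinearMap.ker g := by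
    apply Submodule.eq_of_le_of_finrank_eq hle
    rw [← hk]
    exact LinearEquiv.finrank_map_eq A _
  let q := Submodule.Quotient.equiv _ _ A hmap
  let r := (f.quotKerEquivRange.symm.trans q).trans g.quotKerEquivRange
  obtain ⟨B, hB⟩ := Submodule.exists_linearEquiv_restrict_eq r
  refine ⟨A, B, fun x => ?_⟩
  have := hB ⟨f x, LinearMap.mem_range_self f x⟩
  rw [← this]
  simp [r, q, LinearMap.quotKerEquivRange_symm_apply_image]

lemma exists_matrix_equiv {a b : ℕ} (T S : Matrix (Fin b) (Fin a) F) (h : T.rank = S.rank) :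
    ∃ (A A' : Matrix (Fin a) (Fin a) F) (B B' : Matrix (Fin b) (Fin b) F),
      A * A' = 1 ∧ B * B' = 1 ∧ B * T * A' = S := by
  obtain ⟨A, B, hAB⟩ := exists_equiv_comp T.mulVecLin S.mulVecLin h
  refine ⟨LinearMap.toMatrix' A.toLinearMap, LinearMap.toMatrix' A.symm.toLinearMap,
    LinearMap.toMatrix' B.toLinearMap, LinearMap.toMatrix' B.symm.toLinearMap, ?_, ?_, ?_⟩
  · rw [← LinearMap.toMatrix'_comp]; simp
  · rw [← LinearMap.toMatrix'_comp]; simp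
  · apply (Matrix.toLin').injective
    rw [Matrix.toLin'_mul, Matrix.toLin'_mul]
    apply LinearMap.ext
    intro x
    have := hAB (A.symm x)
    simpa using this

lemma rank_add_le' {a b : ℕ} (T S : Matrix (Fin b) (Fin a) F) :
    (T + S).rank ≤ T.rank + S.rank := by
  unfold Matrix.rank
  have : LinearMap.range (T + S).mulVecLin ≤
      LinearMap.range T.mulVecLin ⊔ LinearMap.range S.mulVecLin := by
    rw [Matrix.mulVecLin_add]
    exact LinearMap.range_add_le _ _
  exact (Submodule.finrank_mono this).trans (Submodule.finrank_add_le_finrank_add_finrank _ _)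

lemma exists_add_rank {a b k l : ℕ} (ha : k + l ≤ a) (hb : k + l ≤ b) :
    ∃ T S : Matrix (Fin b) (Fin a) F, T.rank = k ∧ S.rank = l ∧ (T + S).rank = k + l := by
  let T : Matrix (Fin b) (Fin a) F :=
    Matrix.of fun i j => if (i : ℕ) = j ∧ (i : ℕ) < k then 1 else 0
  let S : Matrix (Fin b) (Fin a) F :=
    Matrix.of fun i j => if (i : ℕ) = j ∧ k ≤ (i : ℕ) ∧ (i : ℕ) < k + l then 1 else 0
  have hT : T.rank ≤ k := by
    have := T.rank_le_card_of_support_subset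
      (Finset.univ.image (fun i : Fin k => (⟨i, by omega⟩ : Fin b))) (by
        intro i hi
        by_contra hc
        apply hi
        ext j
        have : ¬ (i : ℕ) < k := fun h => hc (by
          simp only [Finset.coe_image, Finset.coe_univ, Set.image_univ, Set.mem_range]
          exact ⟨⟨i, h⟩, rfl⟩)
        simp [T, this, Matrix.row])
    exact this.trans (Finset.card_image_le.trans (by simp))
  have hS : S.rank ≤ l := by
    have := S.rank_le_card_of_support_subset
      (Finset.univ.image (fun i : Fin l => (⟨k + i, by omega⟩ : Fin b))) (by
        intro i hi
        by_contra hc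
        apply hi
        ext j
        have : ¬ (k ≤ (i : ℕ) ∧ (i : ℕ) < k + l) := fun h => hc (by
          simp only [Finset.coe_image, Finset.coe_univ, Set.image_univ, Set.mem_range]
          exact ⟨⟨i - k, by omega⟩, by ext; simp; omega⟩)
        simp only [S, Matrix.row, Matrix.of_apply, Pi.zero_apply]
        rw [if_neg (fun h => this h.2)])
    exact this.trans (Finset.card_image_le.trans (by simp))
  have hTS : k + l ≤ (T + S).rank := by
    have h1 : (T + S).submatrix (Fin.castLE hb) (Fin.castLE ha) = 1 := by
      ext i j
      have hi := i.2
      simp only [T, S, Matrix.submatrix_apply, Matrix.add_apply, Matrix.of_apply,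
        Fin.val_castLE, Matrix.one_apply, Fin.ext_iff]
      split_ifs <;> first | omega | simp
    have h2 := (T + S).rank_submatrix_le (Fin.castLE hb) (Fin.castLE ha)
    rw [h1, Matrix.rank_one, Fintype.card_fin] at h2
    exact h2
  have := rank_add_le' T S
  exact ⟨T, S, by omega, by omega, by omega⟩

/-! ### Characters -/

lemma eq_zero_of_char {χ₀ : AddChar F ℂ} (hχ₀ : χ₀ ≠ 1) {a b : ℕ}
    (X : Matrix (Fin a) (Fin b) F)
    (h : ∀ T : Matrix (Fin b) (Fin a) F, χ₀ ((T * X).trace) = 1) : X = 0 := by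
  by_contra hX
  apply hχ₀
  obtain ⟨i, j, hij⟩ : ∃ i j, X i j ≠ 0 := by
    by_contra! hc
    exact hX (by ext i j; exact hc i j)
  ext c
  have := h (Matrix.single j i (c / X i j))
  rw [Matrix.trace_single_mul] at this
  simpa [hij] using this

/-- The character of the matrix group attached to `X`. -/
def trChar (χ₀ : AddChar F ℂ) {a b : ℕ} (X : Matrix (Fin a) (Fin b) F) :
    AddChar (Matrix (Fin b) (Fin a) F) ℂ where
  toFun T := χ₀ ((T * X).trace)
  map_zero_eq_one' := by simp
  map_add_eq_mul' S T := by rw [Matrix.add_mul, Matrix.trace_add, AddChar.map_add_eq_mul]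

lemma sum_trChar {χ₀ : AddChar F ℂ} (hχ₀ : χ₀ ≠ 1) {a b : ℕ}
    (X : Matrix (Fin a) (Fin b) F) :
    ∑ T : Matrix (Fin b) (Fin a) F, χ₀ ((T * X).trace) =
      if X = 0 then (Fintype.card (Matrix (Fin b) (Fin a) F) : ℂ) else 0 := by
  classical
  have h := AddChar.sum_eq_ite (trChar χ₀ X)
  have h0 : trChar χ₀ X = 0 ↔ X = 0 := by
    constructor
    · intro h
      refine eq_zero_of_char hχ₀ X fun T => ?_
      exact DFunLike.congr_fun h T
    · rintro rfl
      ext T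
      simp [trChar]
  simp only [h0] at h
  exact h

/-! ### The unipotent group -/

lemma uU_mul {n a b : ℕ} (hab : a + b ≤ n) (X Y : Matrix (Fin a) (Fin b) F) :
    uU n a b hab X * uU n a b hab Y = uU n a b hab (X + Y) := by
  have hadd : blockEmbed n a b (X + Y) = blockEmbed n a b X + blockEmbed n a b Y := by
    ext i j
    simp only [blockEmbed, Matrix.of_apply, Matrix.add_apply]
    split_ifs <;> simp
  apply Units.ext
  change (1 + blockEmbed n a b X) * (1 + blockEmbed n a b Y) = 1 + blockEmbed n a b (X + Y)
  rw [hadd, add_mul, mul_add, mul_add, blockEmbed_mul_blockEmbed hab, one_mul, one_mul, mul_one]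
  abel

lemma uU_zero {n a b : ℕ} (hab : a + b ≤ n) :
    uU n a b hab (0 : Matrix (Fin a) (Fin b) F) = 1 := by
  apply Units.ext
  change 1 + blockEmbed n a b 0 = 1
  have : blockEmbed n a b (0 : Matrix (Fin a) (Fin b) F) = 0 := by
    ext i j
    simp [blockEmbed]
  rw [this, add_zero]

lemma blockEmbed_eq (a b : ℕ) (X : Matrix (Fin a) (Fin b) F) :
    blockEmbed (a + b) a b X =
      Matrix.reindexAlgEquiv F F finSumFinEquiv (Matrix.fromBlocks 0 X 0 0) := by
  ext i j
  rw [Matrix.coe_reindexAlgEquiv, Matrix.reindex_apply, Matrix.submatrix_apply]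
  obtain ⟨i, rfl⟩ := finSumFinEquiv.surjective i
  obtain ⟨j, rfl⟩ := finSumFinEquiv.surjective j
  rcases i with i | i <;> rcases j with j | j <;> simp [blockEmbed]

lemma uU_val (a b : ℕ) (hab : a + b ≤ a + b) (X : Matrix (Fin a) (Fin b) F) :
    (uU (a + b) a b hab X : Matrix (Fin (a + b)) (Fin (a + b)) F) =
      Matrix.reindexAlgEquiv F F finSumFinEquiv (Matrix.fromBlocks 1 X 0 1) := by
  change 1 + blockEmbed (a + b) a b X = _
  rw [blockEmbed_eq, ← map_one (Matrix.reindexAlgEquiv F F finSumFinEquiv), ← map_add,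
    ← Matrix.fromBlocks_one, Matrix.fromBlocks_add]
  simp

/-- Levi elements. -/
def levi {a b : ℕ} (A A' : Matrix (Fin a) (Fin a) F) (B B' : Matrix (Fin b) (Fin b) F)
    (hA : A * A' = 1) (hB : B * B' = 1) : GL (Fin (a + b)) F where
  val := Matrix.reindexAlgEquiv F F finSumFinEquiv (Matrix.fromBlocks A 0 0 B)
  inv := Matrix.reindexAlgEquiv F F finSumFinEquiv (Matrix.fromBlocks A' 0 0 B')
  val_inv := by
    rw [← map_mul, Matrix.fromBlocks_multiply]
    simp [hA, hB]
  inv_val := by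
    rw [← map_mul, Matrix.fromBlocks_multiply]
    simp [mul_eq_one_comm.1 hA, mul_eq_one_comm.1 hB]

lemma uU_mul_levi {a b : ℕ} (A A' : Matrix (Fin a) (Fin a) F) (B B' : Matrix (Fin b) (Fin b) F)
    (hA : A * A' = 1) (hB : B * B' = 1) (hab : a + b ≤ a + b) (X : Matrix (Fin a) (Fin b) F) :
    uU (a + b) a b hab X * levi A A' B B' hA hB =
      levi A A' B B' hA hB * uU (a + b) a b hab (A' * X * B) := by
  apply Units.ext
  rw [Units.val_mul, Units.val_mul, uU_val, uU_val]
  change _ * Matrix.reindexAlgEquiv F F finSumFinEquiv (Matrix.fromBlocks A 0 0 B) =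
    Matrix.reindexAlgEquiv F F finSumFinEquiv (Matrix.fromBlocks A 0 0 B) * _
  rw [← map_mul, ← map_mul, Matrix.fromBlocks_multiply, Matrix.fromBlocks_multiply]
  congr 1
  have : A * (A' * X * B) = X * B := by
    rw [← Matrix.mul_assoc, ← Matrix.mul_assoc, hA, Matrix.one_mul]
  simp [this]

lemma CharAppears.of_rank_eq {χ₀ : AddChar F ℂ} {n : ℕ}
    {π : Representation ℂ (GL (Fin n) F) V} {a b : ℕ} {hab : a + b ≤ n} (hn : a + b = n)
    {T S : Matrix (Fin b) (Fin a) F} (hT : CharAppears χ₀ π hab T) (h : T.rank = S.rank) :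
    CharAppears χ₀ π hab S := by
  subst hn
  obtain ⟨A, A', B, B', hA, hB, rfl⟩ := exists_matrix_equiv T S h
  obtain ⟨v, hv, hvT⟩ := hT
  refine ⟨π (levi A A' B B' hA hB) v, fun h0 => hv ?_, fun X => ?_⟩
  · have := congrArg (π (levi A A' B B' hA hB)⁻¹) h0
    rw [← Module.End.mul_apply, ← map_mul, inv_mul_cancel, map_one, map_zero] at this
    simpa using this
  · rw [← Module.End.mul_apply, ← map_mul, uU_mul_levi, map_mul, Module.End.mul_apply, hvT,
      map_smul]
    congr 2
    rw [← Matrix.mul_assoc, Matrix.trace_mul_comm, Matrix.mul_assoc, Matrix.mul_assoc]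

/-! ### Projections -/

/-- Unnormalized projection to an eigenspace. -/
noncomputable def proj (χ₀ : AddChar F ℂ) {n : ℕ} (π : Representation ℂ (GL (Fin n) F) V)
    {a b : ℕ} (hab : a + b ≤ n) (T : Matrix (Fin b) (Fin a) F) : V →ₗ[ℂ] V :=
  ∑ X : Matrix (Fin a) (Fin b) F, χ₀ ((T * (-X)).trace) • π (uU n a b hab X)

lemma sum_proj {χ₀ : AddChar F ℂ} (hχ₀ : χ₀ ≠ 1) {n : ℕ}
    (π : Representation ℂ (GL (Fin n) F) V) {a b : ℕ} (hab : a + b ≤ n) :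
    ∑ T, proj χ₀ π hab T =
      (Fintype.card (Matrix (Fin b) (Fin a) F) : ℂ) • (LinearMap.id : V →ₗ[ℂ] V) := by
  unfold proj
  rw [Finset.sum_comm]
  simp_rw [← Finset.sum_smul, sum_trChar hχ₀, neg_eq_zero]
  rw [Finset.sum_eq_single 0]
  · rw [if_pos rfl, uU_zero, map_one]; rfl
  · intro X _ hX
    rw [if_neg hX, zero_smul]
  · simp

lemma proj_mul {χ₀ : AddChar F ℂ} {n : ℕ}
    (π : Representation ℂ (GL (Fin n) F) V) {a b : ℕ} (hab : a + b ≤ n)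
    (T : Matrix (Fin b) (Fin a) F) (Y : Matrix (Fin a) (Fin b) F) :
    proj χ₀ π hab T * π (uU n a b hab Y) = χ₀ ((T * Y).trace) • proj χ₀ π hab T := by
  unfold proj
  rw [Finset.sum_mul, Finset.smul_sum]
  apply Fintype.sum_equiv (Equiv.addRight Y)
  intro X
  rw [smul_mul_assoc, ← map_mul, uU_mul, smul_smul, ← AddChar.map_add_eq_mul,
    ← Matrix.trace_add, ← Matrix.mul_add]
  simp

lemma mul_proj {χ₀ : AddChar F ℂ} {n : ℕ}
    (π : Representation ℂ (GL (Fin n) F) V) {a b : ℕ} (hab : a + b ≤ n)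
    (T : Matrix (Fin b) (Fin a) F) (Y : Matrix (Fin a) (Fin b) F) :
    π (uU n a b hab Y) * proj χ₀ π hab T = χ₀ ((T * Y).trace) • proj χ₀ π hab T := by
  rw [← proj_mul]
  unfold proj
  rw [Finset.sum_mul, Finset.mul_sum]
  refine Finset.sum_congr rfl fun X _ => ?_
  rw [smul_mul_assoc, mul_smul_comm, ← map_mul, ← map_mul, uU_mul, uU_mul, add_comm]

lemma charAppears_of_proj {χ₀ : AddChar F ℂ} {n : ℕ}
    {π : Representation ℂ (GL (Fin n) F) V} {a b : ℕ} {hab : a + b ≤ n}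
    {T : Matrix (Fin b) (Fin a) F} (h : proj χ₀ π hab T ≠ 0) : CharAppears χ₀ π hab T := by
  obtain ⟨v, hv⟩ : ∃ v, proj χ₀ π hab T v ≠ 0 := by
    by_contra! hc
    exact h (LinearMap.ext hc)
  exact ⟨_, hv, fun X => LinearMap.congr_fun (mul_proj π hab T X) v⟩

lemma CharAppears.of_tprod {χ₀ : AddChar F ℂ} (hχ₀ : χ₀ ≠ 1) {n : ℕ} {V W : Type}
    [AddCommGroup V] [Module ℂ V] [AddCommGroup W] [Module ℂ W]
    {π : Representation ℂ (GL (Fin n) F) V} {ρ : Representation ℂ (GL (Fin n) F) W}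
    {a b : ℕ} {hab : a + b ≤ n} {R : Matrix (Fin b) (Fin a) F}
    (h : CharAppears χ₀ (π.tprod ρ) hab R) :
    ∃ T S, CharAppears χ₀ π hab T ∧ CharAppears χ₀ ρ hab S ∧ T + S = R := by
  obtain ⟨v, hv, hvR⟩ := h
  obtain ⟨T, S, hTS⟩ : ∃ T S,
      TensorProduct.map (proj χ₀ π hab T) (proj χ₀ ρ hab S) v ≠ 0 := by
    by_contra! hc
    have h1 : TensorProduct.map (∑ T, proj χ₀ π hab T) (∑ S, proj χ₀ ρ hab S) v = 0 := by
      have : TensorProduct.map (∑ T, proj χ₀ π hab T) (∑ S, proj χ₀ ρ hab S) =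
          ∑ T, ∑ S, TensorProduct.map (proj χ₀ π hab T) (proj χ₀ ρ hab S) := by
        change TensorProduct.mapBilinear (RingHom.id ℂ) V W V W _ _ = _
        rw [map_sum, Finset.sum_comm]
        refine Finset.sum_congr rfl fun S _ => ?_
        rw [map_sum, LinearMap.sum_apply]
        rfl
      rw [this, LinearMap.sum_apply]
      refine Finset.sum_eq_zero fun T _ => ?_
      rw [LinearMap.sum_apply]
      exact Finset.sum_eq_zero fun S _ => hc T S
    rw [sum_proj hχ₀, sum_proj hχ₀, TensorProduct.map_smul_left, TensorProduct.map_smul_right,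
      TensorProduct.map_id] at h1
    have hne : (Fintype.card (Matrix (Fin b) (Fin a) F) : ℂ) ≠ 0 :=
      Nat.cast_ne_zero.2 Fintype.card_ne_zero
    simp only [LinearMap.smul_apply, LinearMap.id_apply, smul_eq_zero] at h1
    tauto
  refine ⟨T, S, charAppears_of_proj fun h0 => hTS ?_, charAppears_of_proj fun h0 => hTS ?_, ?_⟩
  · rw [h0, TensorProduct.map_zero_left]; rfl
  · rw [h0, TensorProduct.map_zero_right]; rfl
  rw [← sub_eq_zero]
  refine eq_zero_of_char hχ₀ _ fun Y => ?_
  have e1 : TensorProduct.map (proj χ₀ π hab T) (proj χ₀ ρ hab S)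
      (π.tprod ρ (uU n a b hab Y) v) =
      χ₀ (((T + S) * Y).trace) • TensorProduct.map (proj χ₀ π hab T) (proj χ₀ ρ hab S) v := by
    rw [Representation.tprod_apply, ← LinearMap.comp_apply, ← TensorProduct.map_comp]
    have hp := proj_mul (χ₀ := χ₀) π hab T Y
    have hr := proj_mul (χ₀ := χ₀) ρ hab S Y
    rw [Module.End.mul_eq_comp] at hp hr
    rw [hp, hr, TensorProduct.map_smul_left, TensorProduct.map_smul_right, smul_smul,
      ← AddChar.map_add_eq_mul, ← Matrix.trace_add, ← Matrix.add_mul]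
    rfl
  rw [hvR, map_smul] at e1
  have e2 := smul_left_injective ℂ hTS e1
  rw [Matrix.trace_mul_comm, Matrix.sub_mul, Matrix.trace_sub, sub_eq_add_neg,
    AddChar.map_add_eq_mul, ← e2, ← AddChar.map_add_eq_mul]
  simp

lemma CharAppears.tprod {χ₀ : AddChar F ℂ} {n : ℕ} {V W : Type}
    [AddCommGroup V] [Module ℂ V] [AddCommGroup W] [Module ℂ W]
    {π : Representation ℂ (GL (Fin n) F) V} {ρ : Representation ℂ (GL (Fin n) F) W}
    {a b : ℕ} {hab : a + b ≤ n} {T S : Matrix (Fin b) (Fin a) F}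
    (hT : CharAppears χ₀ π hab T) (hS : CharAppears χ₀ ρ hab S) :
    CharAppears χ₀ (π.tprod ρ) hab (T + S) := by
  obtain ⟨v, hv, hvT⟩ := hT
  obtain ⟨w, hw, hwS⟩ := hS
  refine ⟨TensorProduct.tmul ℂ v w, fun h0 => ?_, fun X => ?_⟩
  · obtain ⟨f, hf⟩ := Module.Projective.exists_dual_ne_zero ℂ hv
    obtain ⟨g, hg⟩ := Module.Projective.exists_dual_ne_zero ℂ hw
    have := congrArg (TensorProduct.map f g) h0
    rw [TensorProduct.map_tmul, map_zero] at this
    have := congrArg (TensorProduct.lid ℂ ℂ) this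
    rw [TensorProduct.lid_tmul, map_zero, smul_eq_mul] at this
    exact mul_ne_zero hf hg this
  · rw [Representation.tprod_apply, TensorProduct.map_tmul, hvT, hwS, TensorProduct.smul_tmul_smul,
      ← AddChar.map_add_eq_mul, ← Matrix.trace_add, ← Matrix.add_mul]

/-- (Proposition 6.3.1 a)). Tensor products add `U`-ranks in
the low-rank range: here `k + ℓ < n/2 - 1` is expressed as `2*(k+ℓ) + 2 < n`. -/
theorem uRank_tprod
    (χ₀ : AddChar F ℂ) (hχ₀ : χ₀ ≠ 1)
    {n : ℕ} {V W : Type} [AddCommGroup V] [Module ℂ V] [FiniteDimensional ℂ V]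
    [AddCommGroup W] [Module ℂ W] [FiniteDimensional ℂ W]
    (π : Representation ℂ (GL (Fin n) F) V) (ρ : Representation ℂ (GL (Fin n) F) W)
    {k ℓ : ℕ}
    (hπ : HasURank χ₀ π k) (hρ : HasURank χ₀ ρ ℓ)
    (hlow : 2 * (k + ℓ) + 2 < n) :
    HasURank χ₀ (π.tprod ρ) (k + ℓ) := by
  obtain ⟨⟨T, hT, hTk⟩, hπ'⟩ := hπ
  obtain ⟨⟨S, hS, hSl⟩, hρ'⟩ := hρ
  refine ⟨?_, fun R hR => ?_⟩
  · obtain ⟨T', S', hT', hS', hTS⟩ := exists_add_rank (F := F) (a := n / 2) (b := n - n / 2)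
      (k := k) (l := ℓ) (by omega) (by omega)
    exact ⟨T' + S', (hT.of_rank_eq (by omega) (hTk.trans hT'.symm)).tprod
      (hS.of_rank_eq (by omega) (hSl.trans hS'.symm)), hTS⟩
  · obtain ⟨T', S', hT', hS', rfl⟩ := hR.of_tprod hχ₀
    exact (rank_add_le' T' S').trans (add_le_add (hπ' _ hT') (hρ' _ hS'))

end Stmt9
end
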